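/- arXiv:0706.2955 — 2 statements merged into one kernel-verified Lean document; each statement's English description precedes it below -/
import Mathlib

section
/- The elliptic curve over ℚ defined by Y² = X³ − 22187952X + 23592760704 has a rational point of order 8. -/
open WeierstrassCurve

/-! Let `P = (588, 103680)`. The tangent at `P` has slope `-102` and gives `2P = (9228, 777600)`;
the tangent at `2P` has slope `150` and gives `4P = (4044, 0)`, which has order two because its
`y`-coordinate vanishes. Whenever `2Q` has even order, `Q` has twice that order, so `2P` has order
four and `P` has order eight. -/

theorem addOrderOf_eq_mul_of_nsmul_eq_of_dvd {M : Type*} [AddMonoid M] {a b : M} {n : ℕ}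
    (hab : n • a = b) (hn : n ∣ addOrderOf b) : addOrderOf a = n * addOrderOf b := by
  subst hab
  have n_ne_zero : n ≠ 0 := by
    rintro rfl
    simp at hn
  have n_dvd : n ∣ addOrderOf a := hn.trans (addOrderOf_smul_dvd n)
  rw [addOrderOf_nsmul_of_dvd n_ne_zero n_dvd, Nat.mul_div_cancel' n_dvd]

section Doubling

variable {F : Type*} [Field F] [DecidableEq F] {W : Affine F} {x y : F}

theorem addOrderOf_some_eq_two_of_Y_eq (h : W.Nonsingular x y) (hy : y = W.negY x y) :
    addOrderOf (Affine.Point.some x y h) = 2 :=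
  addOrderOf_eq_prime ((two_nsmul _).trans (Affine.Point.add_self_of_Y_eq hy))
    (Affine.Point.some_ne_zero h)

theorem slope_self_eq_of_mul_eq {ℓ : F} (hy : y ≠ W.negY x y)
    (hℓ : ℓ * (y - W.negY x y) = 3 * x ^ 2 + 2 * W.a₂ * x + W.a₄ - W.a₁ * y) :
    W.slope x x y y = ℓ := by
  rw [Affine.slope_of_Y_ne rfl hy, div_eq_iff (sub_ne_zero.2 hy), hℓ]

theorem two_nsmul_some_eq_some {x' y' : F} (ℓ : F) (h : W.Nonsingular x y)
    (h' : W.Nonsingular x' y') (hy : y ≠ W.negY x y)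
    (hℓ : ℓ * (y - W.negY x y) = 3 * x ^ 2 + 2 * W.a₂ * x + W.a₄ - W.a₁ * y)
    (hx' : W.addX x x ℓ = x') (hy' : W.addY x x y ℓ = y') :
    2 • Affine.Point.some x y h = Affine.Point.some x' y' h' := by
  subst hx' hy'
  rw [two_nsmul, Affine.Point.add_self_of_Y_ne hy, Affine.Point.some.injEq,
    slope_self_eq_of_mul_eq hy hℓ]
  exact ⟨rfl, rfl⟩

end Doubling

theorem curve_has_point_of_order_eight
    (W : WeierstrassCurve.Affine ℚ) (hW : W = ⟨0, 0, 0, -22187952, 23592760704⟩) :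
    ∃ P : W.Point, addOrderOf P = 8 := by
  have hP : W.Nonsingular 588 103680 := by
    norm_num [Affine.nonsingular_iff, Affine.equation_iff, hW]
  have hP₂ : W.Nonsingular 9228 777600 := by
    norm_num [Affine.nonsingular_iff, Affine.equation_iff, hW]
  have hP₄ : W.Nonsingular 4044 0 := by
    norm_num [Affine.nonsingular_iff, Affine.equation_iff, hW]
  have two_nsmul_P : 2 • Affine.Point.some _ _ hP = Affine.Point.some _ _ hP₂ := by
    apply two_nsmul_some_eq_some (-102) <;>
      norm_num [Affine.addX, Affine.addY, Affine.negAddY, Affine.negY, hW]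
  have two_nsmul_P₂ : 2 • Affine.Point.some _ _ hP₂ = Affine.Point.some _ _ hP₄ := by
    apply two_nsmul_some_eq_some 150 <;>
      norm_num [Affine.addX, Affine.addY, Affine.negAddY, Affine.negY, hW]
  have order_P₄ : addOrderOf (Affine.Point.some _ _ hP₄) = 2 :=
    addOrderOf_some_eq_two_of_Y_eq hP₄ (by norm_num [Affine.negY, hW])
  have order_P₂ : addOrderOf (Affine.Point.some _ _ hP₂) = 4 := by
    rw [addOrderOf_eq_mul_of_nsmul_eq_of_dvd two_nsmul_P₂ (by rw [order_P₄]), order_P₄]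
  have order_P : addOrderOf (Affine.Point.some _ _ hP) = 8 := by
    rw [addOrderOf_eq_mul_of_nsmul_eq_of_dvd two_nsmul_P (by norm_num [order_P₂]), order_P₂]
  exact ⟨_, order_P⟩
end

section
/- Fix a nonzero integer Δ and let t be the number of distinct prime factors of Δ. Then the set of pairs (A, B) ∈ ℤ × ℤ such that 4A³ + 27B² ≠ 0, the discriminant −16(4A³ + 27B²) of the elliptic curve Y² = X³ + A·X + B equals Δ, and this curve has a rational point of order 5, is finite and has cardinality at most 7¹⁸¹⁵ + 6·7^(20(t+1)). -/
open WeierstrassCurve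

/-!
A rational point of order `5` puts the curve in Tate normal form, with a parameter `a / b` in
lowest terms for which every prime factor of `ab(a² - 11ab - b²)` divides `5Δ`; together with `Δ`
and the sign of `B`, the parameter determines the curve. It remains to count the solutions `(a, b)`
of this `S`-unit equation, which is done by Evertse's method. Over `ℚ(√5)` the factor
`a² - 11ab - b²` splits, so that at each place a solution gives three numbers with sum `0`. The
Hermite–Padé approximations to a power of `1 - z` combine two solutions into a determinant whose
norm is a nonzero integer: it is divisible by high powers of the primes of `S` at which the
solutions are of the same local type, and small at the real places. If the two solutions moreover
distribute their height over the places in nearly the same way, their heights `h ≤ h'` therefore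
satisfy `3h/2 ≤ h'`, and `h' < 27h` when `h` is large. Reading `log h` modulo a period then
separates all the large solutions sharing their local types and the discretized distribution.
-/

section PadeForms

open Finset

/-- The binary form of degree `N` giving the Hermite–Padé approximants to cyclic triples
`x + y + z = 0`, see `sum_pow_mul_padeForm`. -/
def padeForm {R : Type*} [CommSemiring R] (N : ℕ) (x z : R) : R :=
  ∑ k ∈ range (N + 1),
    ((N + k).choose k * (3 * N + 1).choose (N - k) : ℕ) * x ^ k * z ^ (N - k)

theorem map_padeForm {F R S : Type*} [CommSemiring R] [CommSemiring S] [FunLike F R S]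
    [RingHomClass F R S] (f : F) (N : ℕ) (x z : R) :
    f (padeForm N x z) = padeForm N (f x) (f z) := by
  simp [padeForm]

theorem integral_pow_mul_one_sub_pow (i j : ℕ) :
    ∫ u in (0 : ℝ)..1, u ^ i * (1 - u) ^ j =
      (i.factorial * j.factorial : ℝ) / (i + j + 1).factorial := by
  have hbeta := Complex.betaIntegral_eq_Gamma_mul_div (i + 1) (j + 1)
    (by norm_cast; simp) (by norm_cast; simp)
  rw [Complex.Gamma_nat_eq_factorial, Complex.Gamma_nat_eq_factorial,
    show (i + 1 + (j + 1) : ℂ) = (i + j + 1 : ℕ) + 1 by push_cast; ring,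
    Complex.Gamma_nat_eq_factorial] at hbeta
  simp only [Complex.betaIntegral, add_sub_cancel_right, Complex.cpow_natCast] at hbeta
  rw [← Complex.ofReal_inj, ← intervalIntegral.integral_ofReal]
  push_cast
  exact hbeta

theorem padeForm_eq_integral (N : ℕ) (x z : ℝ) :
    padeForm N x z = (3 * N + 1).factorial / N.factorial ^ 3 *
      ∫ u in (0 : ℝ)..1, u ^ N * (1 - u) ^ N * (z + x * u) ^ N := by
  have expand (u : ℝ) : u ^ N * (1 - u) ^ N * (z + x * u) ^ N =
      ∑ k ∈ range (N + 1),
        (x ^ k * z ^ (N - k) * N.choose k) * (u ^ (N + k) * (1 - u) ^ N) := by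
    rw [add_comm z, add_pow, mul_sum]
    exact sum_congr rfl fun k _ => by ring
  simp_rw [expand]
  rw [intervalIntegral.integral_finsetSum
    (fun k _ => Continuous.intervalIntegrable (by fun_prop) _ _), mul_sum, padeForm]
  refine sum_congr rfl fun k hk => ?_
  have hkN : k ≤ N := mem_range_succ_iff.mp hk
  rw [intervalIntegral.integral_const_mul, integral_pow_mul_one_sub_pow, Nat.cast_mul,
    Nat.cast_choose ℝ (Nat.le_add_left k N),
    Nat.cast_choose ℝ (show N - k ≤ 3 * N + 1 by lia), Nat.cast_choose ℝ hkN,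
    Nat.add_sub_cancel, show 3 * N + 1 - (N - k) = N + k + N + 1 by lia]
  field_simp

theorem pow_mul_padeForm_eq_integral (N : ℕ) (α β γ : ℝ) :
    (β - α) ^ (2 * N + 1) * padeForm N (β - α) (α - γ) =
      (-1) ^ N * ((3 * N + 1).factorial / N.factorial ^ 3) *
        ∫ t in α..β, ((t - α) * (t - β) * (t - γ)) ^ N := by
  have substitution := intervalIntegral.mul_integral_comp_add_mul (a := 0) (b := 1)
    (f := fun t => ((t - α) * (t - β) * (t - γ)) ^ N) (β - α) α
  have integrand (u : ℝ) :
      ((α + (β - α) * u - α) * (α + (β - α) * u - β) * (α + (β - α) * u - γ)) ^ N =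
        (-1) ^ N * (β - α) ^ (2 * N) * (u ^ N * (1 - u) ^ N * (α - γ + (β - α) * u) ^ N) := by
    rw [pow_mul]
    simp only [← mul_pow]
    ring
  simp only [mul_zero, add_zero, mul_one, add_sub_cancel, integrand,
    intervalIntegral.integral_const_mul] at substitution
  rw [← substitution, padeForm_eq_integral]
  have hsign : ((-1 : ℝ) ^ N) ^ 2 = 1 := by rw [← pow_mul, mul_comm, pow_mul]; simp
  linear_combination (-(β - α) ^ (2 * N + 1) * ((3 * N + 1).factorial / N.factorial ^ 3) *
    ∫ u in (0 : ℝ)..1, u ^ N * (1 - u) ^ N * (α - γ + (β - α) * u) ^ N) * hsign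

theorem sum_pow_sub_mul_padeForm_real (N : ℕ) (α β γ : ℝ) :
    (β - α) ^ (2 * N + 1) * padeForm N (β - α) (α - γ) +
      (γ - β) ^ (2 * N + 1) * padeForm N (γ - β) (β - α) +
      (α - γ) ^ (2 * N + 1) * padeForm N (α - γ) (γ - β) = 0 := by
  set F : ℝ → ℝ := fun t => ((t - α) * (t - β) * (t - γ)) ^ N
  have hF (a b : ℝ) : IntervalIntegrable F MeasureTheory.volume a b :=
    Continuous.intervalIntegrable (by fun_prop) _ _
  have hβ : (fun t : ℝ => ((t - β) * (t - γ) * (t - α)) ^ N) = F := by ext; ring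
  have hγ : (fun t : ℝ => ((t - γ) * (t - α) * (t - β)) ^ N) = F := by ext; ring
  have closed : (∫ t in α..β, F t) + (∫ t in β..γ, F t) + ∫ t in γ..α, F t = 0 := by
    rw [intervalIntegral.integral_add_adjacent_intervals (hF _ _) (hF _ _),
      intervalIntegral.integral_add_adjacent_intervals (hF _ _) (hF _ _),
      intervalIntegral.integral_same]
  rw [pow_mul_padeForm_eq_integral, pow_mul_padeForm_eq_integral, pow_mul_padeForm_eq_integral,
    hβ, hγ, ← mul_add, ← mul_add, closed, mul_zero]

/-- An identity between polynomials over `ℤ`, so it suffices to verify it over `ℝ`. -/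
theorem sum_pow_sub_mul_padeForm {R : Type*} [CommRing R] (N : ℕ) (α β γ : R) :
    (β - α) ^ (2 * N + 1) * padeForm N (β - α) (α - γ) +
      (γ - β) ^ (2 * N + 1) * padeForm N (γ - β) (β - α) +
      (α - γ) ^ (2 * N + 1) * padeForm N (α - γ) (γ - β) = 0 := by
  let X (i : Fin 3) : MvPolynomial (Fin 3) ℤ := MvPolynomial.X i
  have universal : (X 1 - X 0) ^ (2 * N + 1) * padeForm N (X 1 - X 0) (X 0 - X 2) +
      (X 2 - X 1) ^ (2 * N + 1) * padeForm N (X 2 - X 1) (X 1 - X 0) +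
      (X 0 - X 2) ^ (2 * N + 1) * padeForm N (X 0 - X 2) (X 2 - X 1) = 0 := by
    refine MvPolynomial.funext fun r => Int.cast_injective (α := ℝ) ?_
    have cast_padeForm (x z : ℤ) : ((padeForm N x z : ℤ) : ℝ) = padeForm N (x : ℝ) z :=
      map_padeForm (Int.castRingHom ℝ) N x z
    simpa [X, map_padeForm, cast_padeForm] using
      sum_pow_sub_mul_padeForm_real N (r 0) (r 1) (r 2)
  simpa [X, map_padeForm] using congrArg (MvPolynomial.aeval ![α, β, γ]) universal

theorem sum_pow_mul_padeForm {R : Type*} [CommRing R] (N : ℕ) {x y z : R} (h : x + y + z = 0) :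
    x ^ (2 * N + 1) * padeForm N x z + y ^ (2 * N + 1) * padeForm N y x +
      z ^ (2 * N + 1) * padeForm N z y = 0 := by
  obtain rfl : z = 0 - (x + y) := by linear_combination h
  simpa using sum_pow_sub_mul_padeForm N 0 x (x + y)

theorem padeForm_eq_neg_one_pow_mul (N : ℕ) {x y z : ℝ} (h : x + y + z = 0) :
    padeForm N x z = (-1) ^ N * padeForm N x y := by
  have reflection := intervalIntegral.integral_comp_sub_left (a := 0) (b := 1)
    (fun u : ℝ => u ^ N * (1 - u) ^ N * (z + x * u) ^ N) 1
  have integrand (u : ℝ) : (1 - u) ^ N * (1 - (1 - u)) ^ N * (z + x * (1 - u)) ^ N =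
      (-1) ^ N * (u ^ N * (1 - u) ^ N * (y + x * u) ^ N) := by
    rw [show z + x * (1 - u) = -1 * (y + x * u) by linear_combination h, mul_pow]
    ring
  simp only [sub_self, sub_zero, integrand, intervalIntegral.integral_const_mul] at reflection
  rw [padeForm_eq_integral, padeForm_eq_integral, ← reflection]
  ring

theorem padeForm_pos {R : Type*} [CommSemiring R] [PartialOrder R] [IsStrictOrderedRing R]
    (N : ℕ) {x z : R} (hx : 0 < x) (hz : 0 < z) : 0 < padeForm N x z := by
  refine sum_pos (fun k _ => ?_) nonempty_range_add_one
  have : 0 < (N + k).choose k * (3 * N + 1).choose (N - k) :=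
    Nat.mul_pos (Nat.choose_pos (by lia)) (Nat.choose_pos (by lia))
  have : (0 : R) < ((N + k).choose k * (3 * N + 1).choose (N - k) : ℕ) := by exact_mod_cast this
  positivity

theorem padeForm_neg {R : Type*} [CommRing R] (N : ℕ) (x z : R) :
    padeForm N (-x) (-z) = (-1) ^ N * padeForm N x z := by
  rw [padeForm, padeForm, mul_sum]
  refine sum_congr rfl fun k hk => ?_
  rw [neg_pow x, neg_pow z, ← Nat.add_sub_cancel' (mem_range_succ_iff.mp hk), pow_add]
  simp only [Nat.add_sub_cancel_left]
  ring

theorem padeForm_mul_padeForm_pos {R : Type*} [CommRing R] [LinearOrder R] [IsStrictOrderedRing R]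
    (N : ℕ) {x y : R} (h : 0 < x * y) : 0 < padeForm N x y * padeForm N y x := by
  rcases pos_and_pos_or_neg_and_neg_of_mul_pos h with ⟨hx, hy⟩ | ⟨hx, hy⟩
  · exact mul_pos (padeForm_pos N hx hy) (padeForm_pos N hy hx)
  · have := mul_pos (padeForm_pos N (neg_pos.2 hx) (neg_pos.2 hy))
      (padeForm_pos N (neg_pos.2 hy) (neg_pos.2 hx))
    rwa [padeForm_neg, padeForm_neg, mul_mul_mul_comm, ← mul_pow, neg_one_mul, neg_neg, one_pow,
      one_mul] at this

theorem choose_mul_choose_le_two_pow {N k : ℕ} (hk : k ≤ N) :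
    (N + k).choose k * (3 * N + 1).choose (N - k) ≤ 2 ^ (5 * N + 1) :=
  calc
    _ ≤ 2 ^ (N + k) * 2 ^ (3 * N + 1) :=
      Nat.mul_le_mul (Nat.choose_le_two_pow _ _) (Nat.choose_le_two_pow _ _)
    _ = 2 ^ (N + k + (3 * N + 1)) := (pow_add _ _ _).symm
    _ ≤ 2 ^ (5 * N + 1) := Nat.pow_le_pow_right two_pos (by linarith [hk])

theorem abs_padeForm_le (N : ℕ) {x z M : ℝ} (hx : |x| ≤ M) (hz : |z| ≤ M) :
    |padeForm N x z| ≤ 2 ^ (6 * N + 1) * M ^ N := by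
  have hM : 0 ≤ M := (abs_nonneg x).trans hx
  have term_le : ∀ k ∈ range (N + 1),
      |(((N + k).choose k * (3 * N + 1).choose (N - k) : ℕ) : ℝ) * x ^ k * z ^ (N - k)| ≤
        2 ^ (5 * N + 1) * M ^ N := fun k hk => by
    have hkN := mem_range_succ_iff.mp hk
    rw [mul_assoc, abs_mul, abs_mul, abs_pow, abs_pow, Nat.abs_cast, ← Nat.add_sub_cancel' hkN,
      pow_add M, Nat.add_sub_cancel_left, Nat.add_sub_cancel' hkN]
    gcongr
    exact_mod_cast choose_mul_choose_le_two_pow hkN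
  calc |padeForm N x z|
    _ ≤ (range (N + 1)).card • (2 ^ (5 * N + 1) * M ^ N) :=
      (abs_sum_le_sum_abs _ _).trans (sum_le_card_nsmul _ _ _ term_le)
    _ = ((N + 1 : ℕ) : ℝ) * (2 ^ (5 * N + 1) * M ^ N) := by rw [card_range, nsmul_eq_mul]
    _ ≤ 2 ^ N * (2 ^ (5 * N + 1) * M ^ N) := by
      gcongr
      exact_mod_cast Nat.lt_two_pow_self
    _ = 2 ^ (6 * N + 1) * M ^ N := by ring

end PadeForms

section PadeTriples

variable {R : Type*} [CommRing R] (N : ℕ) {x y : Fin 3 → R}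

theorem add_add_eq_sum_fin_three {M : Type*} [AddCommMonoid M] (x : Fin 3 → M) (i : Fin 3) :
    x i + x (i + 1) + x (i + 2) = ∑ j, x j := by
  rw [Fin.sum_univ_three]
  fin_cases i
  · rfl
  · exact (add_rotate (x 0) (x 1) (x 2)).symm
  · exact add_rotate (x 2) (x 0) (x 1)

/-- The zero-sum triple of high-order multiples of the entries of a zero-sum triple `x` that is
furnished by `sum_pow_mul_padeForm`. -/
def padeTriple (x : Fin 3 → R) (i : Fin 3) : R :=
  x i ^ (2 * N + 1) * padeForm N (x i) (x (i + 2))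

/-- The `2 × 2` determinant of two zero-sum triples: `y` and `padeTriple N x`. -/
def padeDet (x y : Fin 3 → R) : R :=
  y 0 * padeTriple N x 1 - y 1 * padeTriple N x 0

theorem sum_padeTriple (hx : ∑ i, x i = 0) : ∑ i, padeTriple N x i = 0 := by
  rw [Fin.sum_univ_three] at hx ⊢
  exact sum_pow_mul_padeForm N hx

theorem padeDet_eq (hx : ∑ i, x i = 0) (hy : ∑ i, y i = 0) (i : Fin 3) :
    padeDet N x y = y i * padeTriple N x (i + 1) - y (i + 1) * padeTriple N x i := by
  have hT := sum_padeTriple N hx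
  rw [Fin.sum_univ_three] at hy hT
  fin_cases i
  · rfl
  · change _ = y 1 * padeTriple N x 2 - y 2 * padeTriple N x 1
    rw [padeDet]
    linear_combination padeTriple N x 1 * hy - y 1 * hT
  · change _ = y 2 * padeTriple N x 0 - y 0 * padeTriple N x 2
    rw [padeDet]
    linear_combination y 0 * hT - padeTriple N x 0 * hy

theorem padeDet_zero (x y : Fin 3 → R) : padeDet 0 x y = y 0 * x 1 - y 1 * x 0 := by
  simp [padeDet, padeTriple, padeForm]

theorem map_padeDet {F S : Type*} [CommRing S] [FunLike F R S] [RingHomClass F R S] (f : F)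
    (x y : Fin 3 → R) : f (padeDet N x y) = padeDet N (fun i => f (x i)) (fun i => f (y i)) := by
  simp [padeDet, padeTriple, map_padeForm]

theorem pow_min_dvd_padeDet (hx : ∑ i, x i = 0) (hy : ∑ i, y i = 0) {d : R} {m n : ℕ} (i : Fin 3)
    (hxi : d ^ m ∣ x i) (hyi : d ^ n ∣ y i) : d ^ min n ((2 * N + 1) * m) ∣ padeDet N x y := by
  have hxi' : d ^ ((2 * N + 1) * m) ∣ x i ^ (2 * N + 1) := by
    rw [mul_comm, pow_mul]
    exact pow_dvd_pow_of_dvd hxi _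
  rw [padeDet_eq N hx hy i]
  exact dvd_sub (((pow_dvd_pow d (min_le_left _ _)).trans hyi).mul_right _)
    ((((pow_dvd_pow d (min_le_right _ _)).trans hxi').mul_right _).mul_left _)

end PadeTriples

section RealTriples

variable (N : ℕ) {x y : Fin 3 → ℝ}

theorem exists_mul_succ_pos (hx : ∀ i, x i ≠ 0) : ∃ i, 0 < x i * x (i + 1) := by
  by_contra! h
  have hneg (i : Fin 3) : x i * x (i + 1) < 0 := (h i).lt_of_ne (mul_ne_zero (hx _) (hx _))
  have hsq : x 0 * x (0 + 1) * (x 1 * x (1 + 1)) * (x 2 * x (2 + 1)) =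
      (x 0 * x 1 * x 2) ^ 2 := by
    change x 0 * x 1 * (x 1 * x 2) * (x 2 * x 0) = _
    ring
  exact (sq_nonneg (x 0 * x 1 * x 2)).not_gt <|
    hsq ▸ mul_neg_of_pos_of_neg (mul_pos_of_neg_of_neg (hneg 0) (hneg 1)) (hneg 2)

theorem padeTriple_mul_padeTriple_neg (hN : Odd N) (hx : ∑ i, x i = 0) {i : Fin 3}
    (hi : 0 < x i * x (i + 1)) : padeTriple N x i * padeTriple N x (i + 1) < 0 := by
  have hsum := (add_add_eq_sum_fin_three x i).trans hx
  have hpos := mul_pos (pow_pos hi (2 * N + 1)) (padeForm_mul_padeForm_pos N hi)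
  rw [padeTriple, padeTriple, padeForm_eq_neg_one_pow_mul N hsum, hN.neg_one_pow, add_assoc i 1 2,
    show (1 : Fin 3) + 2 = 0 from rfl, add_zero]
  rw [mul_pow] at hpos
  linarith

theorem padeDet_ne_zero (hN : Odd N) (hx : ∑ i, x i = 0) (hy : ∑ i, y i = 0)
    (hxy : ∀ i, 0 < x i * y i) : padeDet N x y ≠ 0 := by
  intro hD
  obtain ⟨i, hi⟩ := exists_mul_succ_pos fun i => left_ne_zero_of_mul (hxy i).ne'
  have hyi : 0 < y i * y (i + 1) := by
    refine pos_of_mul_pos_right ?_ hi.le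
    rw [mul_mul_mul_comm]
    exact mul_pos (hxy i) (hxy (i + 1))
  rw [padeDet_eq N hx hy i, sub_eq_zero] at hD
  have hneg := mul_neg_of_pos_of_neg hyi (padeTriple_mul_padeTriple_neg N hN hx hi)
  have hsq : y i * y (i + 1) * (padeTriple N x i * padeTriple N x (i + 1)) =
      (y (i + 1) * padeTriple N x i) ^ 2 := by
    linear_combination y (i + 1) * padeTriple N x i * hD
  exact (sq_nonneg _).not_gt (hsq ▸ hneg)

theorem abs_apply_le_norm (x : Fin 3 → ℝ) (i : Fin 3) : |x i| ≤ ‖x‖ := norm_le_pi_norm x i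

theorem abs_padeDet_le (hx : ∑ i, x i = 0) (hy : ∑ i, y i = 0) (i : Fin 3) :
    |padeDet N x y| ≤ 2 ^ (6 * N + 1) *
      (|y i| * ‖x‖ ^ (3 * N + 1) + ‖y‖ * (|x i| ^ (2 * N + 1) * ‖x‖ ^ N)) := by
  have triple_le (j : Fin 3) :
      |padeTriple N x j| ≤ |x j| ^ (2 * N + 1) * (2 ^ (6 * N + 1) * ‖x‖ ^ N) := by
    rw [padeTriple, abs_mul, abs_pow]
    gcongr
    exact abs_padeForm_le N (abs_apply_le_norm x _) (abs_apply_le_norm x _)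
  rw [padeDet_eq N hx hy i]
  calc
    _ ≤ |y i| * |padeTriple N x (i + 1)| + |y (i + 1)| * |padeTriple N x i| := by
      rw [← abs_mul, ← abs_mul]
      exact abs_sub _ _
    _ ≤ |y i| * (‖x‖ ^ (2 * N + 1) * (2 ^ (6 * N + 1) * ‖x‖ ^ N)) +
        ‖y‖ * (|x i| ^ (2 * N + 1) * (2 ^ (6 * N + 1) * ‖x‖ ^ N)) := by
      gcongr
      · exact (triple_le (i + 1)).trans (by gcongr; exact abs_apply_le_norm x _)
      · exact abs_apply_le_norm y _
      · exact triple_le i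
    _ = _ := by ring

/-- The logarithmic size of `x i` relative to the largest entry of `x`, counted as a defect: the
archimedean counterpart of a `p`-adic valuation. -/
noncomputable def logDefect (x : Fin 3 → ℝ) (i : Fin 3) : ℝ := Real.log ‖x‖ - Real.log |x i|

theorem norm_pos_of_apply_ne_zero {i : Fin 3} (hi : x i ≠ 0) : 0 < ‖x‖ :=
  (abs_pos.2 hi).trans_le (abs_apply_le_norm x i)

theorem logDefect_nonneg {i : Fin 3} (hi : x i ≠ 0) : 0 ≤ logDefect x i :=
  sub_nonneg.2 (Real.log_le_log (abs_pos.2 hi) (abs_apply_le_norm x i))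

theorem norm_mul_exp_neg_logDefect {i : Fin 3} (hi : x i ≠ 0) :
    ‖x‖ * Real.exp (-logDefect x i) = |x i| := by
  have := norm_pos_of_apply_ne_zero hi
  rw [logDefect, neg_sub, Real.exp_sub, Real.exp_log (abs_pos.2 hi), Real.exp_log this,
    mul_div_cancel₀ _ this.ne']

theorem log_abs_padeDet_le (hx : ∑ i, x i = 0) (hy : ∑ i, y i = 0) {i : Fin 3} (hxi : x i ≠ 0)
    (hyi : y i ≠ 0) (hD : padeDet N x y ≠ 0) :
    Real.log |padeDet N x y| ≤ (6 * N + 2) * Real.log 2 + Real.log ‖y‖ +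
      (3 * N + 1) * Real.log ‖x‖ - min (logDefect y i) ((2 * N + 1) * logDefect x i) := by
  set E := min (logDefect y i) ((2 * N + 1) * logDefect x i)
  have hx₀ := norm_pos_of_apply_ne_zero hxi
  have hy₀ := norm_pos_of_apply_ne_zero hyi
  have hyE : |y i| ≤ ‖y‖ * Real.exp (-E) := by
    rw [← norm_mul_exp_neg_logDefect hyi]
    gcongr
    exact min_le_left _ _
  have hxE : |x i| ^ (2 * N + 1) ≤ ‖x‖ ^ (2 * N + 1) * Real.exp (-E) := by
    rw [← norm_mul_exp_neg_logDefect hxi, mul_pow, ← Real.exp_nat_mul, mul_neg]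
    gcongr
    push_cast
    exact min_le_right _ _
  have hle : |padeDet N x y| ≤ 2 ^ (6 * N + 2) * ‖y‖ * ‖x‖ ^ (3 * N + 1) * Real.exp (-E) :=
    calc
      _ ≤ _ := abs_padeDet_le N hx hy i
      _ ≤ 2 ^ (6 * N + 1) * (‖y‖ * Real.exp (-E) * ‖x‖ ^ (3 * N + 1) +
          ‖y‖ * (‖x‖ ^ (2 * N + 1) * Real.exp (-E) * ‖x‖ ^ N)) := by gcongr
      _ = _ := by ring
  have := Real.log_le_log (abs_pos.2 hD) hle
  rw [Real.log_mul (by positivity) (by positivity), Real.log_mul (by positivity) (by positivity),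
    Real.log_mul (by positivity) (by positivity), Real.log_pow, Real.log_pow, Real.log_exp] at this
  push_cast at this
  linarith

theorem exists_minIndex (x : Fin 3 → ℝ) : ∃ i, ∀ j, |x i| ≤ |x j| :=
  Finite.exists_min fun i => |x i|

/-- The position of a smallest entry. -/
noncomputable def minIndex (x : Fin 3 → ℝ) : Fin 3 := (exists_minIndex x).choose

theorem abs_minIndex_le (x : Fin 3 → ℝ) (j : Fin 3) : |x (minIndex x)| ≤ |x j| :=
  (exists_minIndex x).choose_spec j

theorem norm_le_two_mul_abs (hx : ∑ i, x i = 0) {i j : Fin 3} (hij : i ≠ j)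
    (hi : ∀ k, |x i| ≤ |x k|) : ‖x‖ ≤ 2 * |x j| := by
  have hj := abs_nonneg (x j)
  have hsum := (add_add_eq_sum_fin_three x j).trans hx
  have htri : |x (j + 1)| ≤ |x j| + |x (j + 2)| ∧ |x (j + 2)| ≤ |x j| + |x (j + 1)| := by
    constructor
    · rw [show x (j + 1) = -(x j) - x (j + 2) by linarith, ← abs_neg (x j)]
      exact abs_sub _ _
    · rw [show x (j + 2) = -(x j) - x (j + 1) by linarith, ← abs_neg (x j)]
      exact abs_sub _ _
  have hcases : (i = j + 1 ∨ i = j + 2) ∧ ∀ k, k = j ∨ k = j + 1 ∨ k = j + 2 := by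
    revert hij; clear * -; revert i j; decide
  refine (pi_norm_le_iff_of_nonneg (by linarith)).2 fun k => ?_
  rw [Real.norm_eq_abs]
  have := hi j
  rcases hcases.1 with rfl | rfl <;> rcases hcases.2 k with rfl | rfl | rfl <;> linarith

theorem sum_log_abs_add_logDefect_le (hx : ∀ i, x i ≠ 0) (i : Fin 3) :
    ∑ j, Real.log |x j| + logDefect x i ≤ 3 * Real.log ‖x‖ := by
  have h₁ := logDefect_nonneg (hx (i + 1))
  have h₂ := logDefect_nonneg (hx (i + 2))
  rw [← add_add_eq_sum_fin_three _ i]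
  rw [logDefect] at *
  linarith

theorem le_sum_log_abs_add_logDefect (hx : ∀ i, x i ≠ 0) (hsum : ∑ i, x i = 0) :
    3 * Real.log ‖x‖ - 2 * Real.log 2 ≤ ∑ j, Real.log |x j| + logDefect x (minIndex x) := by
  have le_log {j : Fin 3} (hj : minIndex x ≠ j) :
      Real.log ‖x‖ ≤ Real.log 2 + Real.log |x j| := by
    rw [← Real.log_mul two_ne_zero (abs_ne_zero.2 (hx j))]
    exact Real.log_le_log (norm_pos_of_apply_ne_zero (hx j))
      (norm_le_two_mul_abs hsum hj (abs_minIndex_le x))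
  rw [← add_add_eq_sum_fin_three _ (minIndex x), logDefect]
  have h₁ : minIndex x ≠ minIndex x + 1 := by simp
  have h₂ : minIndex x ≠ minIndex x + 2 := by simp
  linarith [le_log h₁, le_log h₂]

end RealTriples

section NormDeterminants

variable {R : Type*} [CommRing R]

/-- The quadratic factor of the discriminant `a⁵b⁵(a² - 11ab - b²)` of the universal elliptic curve
with a point of order `5`. -/
def tateQuadratic (a b : R) : R := a ^ 2 - 11 * a * b - b ^ 2

theorem tateQuadratic_eq_mul {ρ : R} (hρ : ρ * ρ = 1 + 11 * ρ) (a b : R) :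
    tateQuadratic a b = (a - ρ * b) * (a - (11 - ρ) * b) := by
  rw [tateQuadratic]
  linear_combination b ^ 2 * hρ

theorem intCast_tateQuadratic (a b : ℤ) :
    ((tateQuadratic a b : ℤ) : R) = tateQuadratic (a : R) b := by
  simp [tateQuadratic]

theorem isCoprime_fst_tateQuadratic {a b : R} (h : IsCoprime a b) :
    IsCoprime a (tateQuadratic a b) := by
  convert (h.pow_right (n := 2)).neg_right.add_mul_left_right (a - 11 * b) using 1
  rw [tateQuadratic]
  ring

theorem isCoprime_snd_tateQuadratic {a b : R} (h : IsCoprime a b) :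
    IsCoprime b (tateQuadratic a b) := by
  convert (h.symm.pow_right (n := 2)).add_mul_left_right (-(11 * a + b)) using 1
  rw [tateQuadratic]
  ring

theorem eleven_sub_mul_self {ρ : R} (hρ : ρ * ρ = 1 + 11 * ρ) :
    (11 - ρ) * (11 - ρ) = 1 + 11 * (11 - ρ) := by
  linear_combination hρ

/-- The zero-sum triple `(a, -ρb, ρb - a)` attached to a pair `(a, b)`; the product of its entries
over the two roots `ρ` of `ρ² = 11ρ + 1` is `-a²b²(a² - 11ab - b²)`. -/
def rootTriple (ρ : R) (x : ℤ × ℤ) : Fin 3 → R := ![x.1, -(ρ * x.2), ρ * x.2 - x.1]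

theorem sum_rootTriple (ρ : R) (x : ℤ × ℤ) : ∑ i, rootTriple ρ x i = 0 := by
  simp only [Fin.sum_univ_three, rootTriple, Matrix.cons_val]
  ring

/-- Evaluation of `ℤ[ω]`, `ω² = 11ω + 1`, at a root `ρ`. -/
def rootEval {ρ : R} (hρ : ρ * ρ = 1 + 11 * ρ) : QuadraticAlgebra ℤ 1 11 →ₐ[ℤ] R :=
  QuadraticAlgebra.lift ⟨ρ, by simpa using hρ⟩

theorem rootEval_apply {ρ : R} (hρ : ρ * ρ = 1 + 11 * ρ) (z : QuadraticAlgebra ℤ 1 11) :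
    rootEval hρ z = z.re + z.im * ρ := by
  simp [rootEval, QuadraticAlgebra.lift]

theorem rootEval_rootTriple {ρ : R} (hρ : ρ * ρ = 1 + 11 * ρ) (x : ℤ × ℤ) (i : Fin 3) :
    rootEval hρ (rootTriple QuadraticAlgebra.omega x i) = rootTriple ρ x i := by
  fin_cases i <;> simp [rootTriple, rootEval_apply, sub_eq_add_neg, add_comm, mul_comm]

theorem intCast_norm_eq_mul {ρ : R} (hρ : ρ * ρ = 1 + 11 * ρ) (z : QuadraticAlgebra ℤ 1 11) :
    ((QuadraticAlgebra.norm z : ℤ) : R) =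
      rootEval hρ z * rootEval (eleven_sub_mul_self hρ) z := by
  rw [rootEval_apply, rootEval_apply, QuadraticAlgebra.norm_def]
  push_cast
  linear_combination (z.im : R) ^ 2 * hρ

/-- The norm from `ℤ[ω]`, `ω² = 11ω + 1`, of the Padé determinant of two pairs. -/
def normDet (N : ℕ) (x y : ℤ × ℤ) : ℤ :=
  QuadraticAlgebra.norm (a := 1) (b := 11)
    (padeDet N (rootTriple QuadraticAlgebra.omega x) (rootTriple QuadraticAlgebra.omega y))

theorem intCast_normDet {ρ : R} (hρ : ρ * ρ = 1 + 11 * ρ) (N : ℕ) (x y : ℤ × ℤ) :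
    (normDet N x y : R) = padeDet N (rootTriple ρ x) (rootTriple ρ y) *
      padeDet N (rootTriple (11 - ρ) x) (rootTriple (11 - ρ) y) := by
  simp only [normDet, intCast_norm_eq_mul hρ, map_padeDet, rootEval_rootTriple]

theorem pow_min_dvd_normDet {d : ℤ} {m n : ℕ} (N : ℕ) (x y : ℤ × ℤ) (i : Fin 3)
    (hx : (d ^ m : QuadraticAlgebra ℤ 1 11) ∣ rootTriple QuadraticAlgebra.omega x i)
    (hy : (d ^ n : QuadraticAlgebra ℤ 1 11) ∣ rootTriple QuadraticAlgebra.omega y i) :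
    d ^ min (2 * n) ((2 * N + 1) * (2 * m)) ∣ normDet N x y := by
  have := map_dvd QuadraticAlgebra.norm
    (pow_min_dvd_padeDet N (sum_rootTriple _ x) (sum_rootTriple _ y) i hx hy)
  rw [map_pow, QuadraticAlgebra.norm_intCast, Int.cast_id, ← pow_mul] at this
  rwa [mul_left_comm, Nat.mul_min_mul_left]

end NormDeterminants

section LocalDivisibility

variable {p : ℕ} [Fact p.Prime] {x y : ℤ × ℤ}

theorem natCast_dvd_intCast_padicInt_iff (n : ℤ) : (p : ℤ_[p]) ∣ n ↔ (p : ℤ) ∣ n := by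
  simpa using PadicInt.pow_p_dvd_int_iff 1 n

-- The discriminant of `z² - 11z - 1` is `5³`.
theorem not_dvd_two_mul_sub_eleven (hp5 : p ≠ 5) {z : ℤ_[p]}
    (hz : (p : ℤ_[p]) ∣ z ^ 2 - 11 * z - 1) : ¬ (p : ℤ_[p]) ∣ 2 * z - 11 := by
  intro h
  have h125 : (p : ℤ_[p]) ∣ ((125 : ℤ) : ℤ_[p]) := by
    convert dvd_sub (h.mul_right (2 * z - 11)) (hz.mul_left 4) using 1
    push_cast
    ring
  rw [natCast_dvd_intCast_padicInt_iff] at h125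
  have hp : p ∣ 5 ^ 3 := by exact_mod_cast h125
  exact hp5 ((Nat.prime_dvd_prime_iff_eq Fact.out Nat.prime_five).mp
    (Nat.Prime.dvd_of_dvd_pow Fact.out hp))

theorem exists_root_of_dvd (hp5 : p ≠ 5) {z : ℤ_[p]} (hz : (p : ℤ_[p]) ∣ z ^ 2 - 11 * z - 1) :
    ∃ ρ : ℤ_[p], ρ * ρ = 1 + 11 * ρ := by
  let F : Polynomial ℤ_[p] := .X ^ 2 - 11 * .X - 1
  have hF (w : ℤ_[p]) : F.aeval w = w ^ 2 - 11 * w - 1 := by simp [F]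
  have hF' : F.derivative.aeval z = 2 * z - 11 := by
    simp [F, Polynomial.derivative_mul, one_add_one_eq_two]
  have hnorm_deriv : ‖F.derivative.aeval z‖ = 1 := by
    have := not_dvd_two_mul_sub_eleven hp5 hz
    rw [← PadicInt.norm_lt_one_iff_dvd, ← hF'] at this
    exact (PadicInt.norm_le_one _).antisymm (not_lt.mp this)
  have hnorm : ‖F.aeval z‖ < ‖F.derivative.aeval z‖ ^ 2 := by
    rw [hnorm_deriv, one_pow, hF]
    exact (PadicInt.norm_lt_one_iff_dvd _).mpr hz
  obtain ⟨ρ, hρ, -⟩ := hensels_lemma hnorm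
  exact ⟨ρ, by linear_combination (hF ρ).symm.trans hρ⟩

theorem exists_root_of_dvd_tateQuadratic (hp5 : p ≠ 5) {a b : ℤ} (hb : ¬ (p : ℤ) ∣ b)
    (h : (p : ℤ) ∣ tateQuadratic a b) : ∃ ρ : ℤ_[p], ρ * ρ = 1 + 11 * ρ := by
  have hunit : IsUnit (b : ℤ_[p]) := by
    rwa [PadicInt.isUnit_iff, ← (PadicInt.norm_le_one _).not_lt_iff_eq,
      PadicInt.norm_lt_one_iff_dvd, natCast_dvd_intCast_padicInt_iff]
  obtain ⟨c, hc⟩ := hunit.exists_right_inv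
  refine exists_root_of_dvd hp5 (z := a * c) ?_
  convert ((natCast_dvd_intCast_padicInt_iff _).mpr h).mul_right (c ^ 2) using 1
  rw [intCast_tateQuadratic, tateQuadratic]
  linear_combination (11 * (a : ℤ_[p]) * c + b * c + 1) * hc

theorem pow_dvd_sub_root_mul (hp5 : p ≠ 5) {ρ : ℤ_[p]} (hρ : ρ * ρ = 1 + 11 * ρ) {a b : ℤ}
    (hb : ¬ (p : ℤ) ∣ b) (hab : (p : ℤ_[p]) ∣ a - ρ * b) {k : ℕ}
    (hk : (p : ℤ) ^ k ∣ tateQuadratic a b) : (p : ℤ_[p]) ^ k ∣ a - ρ * b := by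
  have hconj : ¬ (p : ℤ_[p]) ∣ a - (11 - ρ) * b := by
    intro h
    have hdiff : (p : ℤ_[p]) ∣ (2 * ρ - 11) * b := by
      convert dvd_sub h hab using 1
      ring
    rcases PadicInt.prime_p.dvd_or_dvd hdiff with hρ' | hb'
    · exact not_dvd_two_mul_sub_eleven hp5 (by simp [pow_two, hρ]) hρ'
    · exact hb ((natCast_dvd_intCast_padicInt_iff b).mp hb')
  rw [← PadicInt.pow_p_dvd_int_iff, intCast_tateQuadratic, tateQuadratic_eq_mul hρ] at hk
  exact PadicInt.prime_p.pow_dvd_of_dvd_mul_right k hconj hk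

theorem pow_min_dvd_normDet_of_root {ρ : ℤ_[p]} (hρ : ρ * ρ = 1 + 11 * ρ) (N : ℕ) {m n : ℕ}
    (hx : (p : ℤ_[p]) ^ m ∣ x.1 - ρ * x.2) (hy : (p : ℤ_[p]) ^ n ∣ y.1 - ρ * y.2) :
    (p : ℤ) ^ min n ((2 * N + 1) * m) ∣ normDet N x y := by
  rw [← PadicInt.pow_p_dvd_int_iff, intCast_normDet hρ]
  exact (pow_min_dvd_padeDet N (sum_rootTriple ρ x) (sum_rootTriple ρ y) 2
    ((dvd_sub_comm).mp hx) ((dvd_sub_comm).mp hy)).mul_right _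

variable (p) in
/-- A root of `ρ² = 11ρ + 1` in the `p`-adic integers, or the junk value `0` if there is none. -/
noncomputable def padicRoot : ℤ_[p] :=
  open Classical in if h : ∃ ρ : ℤ_[p], ρ * ρ = 1 + 11 * ρ then h.choose else 0

theorem padicRoot_mul_self (h : ∃ ρ : ℤ_[p], ρ * ρ = 1 + 11 * ρ) :
    padicRoot p * padicRoot p = 1 + 11 * padicRoot p := by
  rw [padicRoot, dif_pos h]
  exact h.choose_spec

variable (p) in
/-- Which of the three factors `a`, `b`, `a - ρb` of `ab(a² - 11ab - b²)` are divisible by `p`. -/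
def localType (x : ℤ × ℤ) : Fin 3 → Prop :=
  ![(p : ℤ) ∣ x.1, (p : ℤ) ∣ x.2, (p : ℤ_[p]) ∣ x.1 - padicRoot p * x.2]

variable (p) in
/-- The exponent of `p` in `a²b²(a² - 11ab - b²)`, except that at the ramified prime `5` the
quadratic factor is left out. -/
def localExponent (x : ℤ × ℤ) : ℕ :=
  2 * padicValInt p x.1 + 2 * padicValInt p x.2 +
    if p = 5 then 0 else padicValInt p (tateQuadratic x.1 x.2)

theorem padicValInt_eq_zero_of_isCoprime {a b : ℤ} (h : IsCoprime a b) (ha : (p : ℤ) ∣ a) :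
    padicValInt p b = 0 :=
  padicValInt.eq_zero_of_not_dvd fun hb ↦
    (Nat.prime_iff_prime_int.mp Fact.out).not_isUnit (h.isUnit_of_dvd' ha hb)

theorem localExponent_of_dvd_fst (h : IsCoprime x.1 x.2) (hx : (p : ℤ) ∣ x.1) :
    localExponent p x = 2 * padicValInt p x.1 := by
  simp [localExponent, padicValInt_eq_zero_of_isCoprime h hx,
    padicValInt_eq_zero_of_isCoprime (isCoprime_fst_tateQuadratic h) hx]

theorem localExponent_of_dvd_snd (h : IsCoprime x.1 x.2) (hx : (p : ℤ) ∣ x.2) :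
    localExponent p x = 2 * padicValInt p x.2 := by
  simp [localExponent, padicValInt_eq_zero_of_isCoprime h.symm hx,
    padicValInt_eq_zero_of_isCoprime (isCoprime_snd_tateQuadratic h) hx]

omit [Fact p.Prime] in
theorem localExponent_of_not_dvd (hp5 : p ≠ 5) (hx1 : ¬ (p : ℤ) ∣ x.1) (hx2 : ¬ (p : ℤ) ∣ x.2) :
    localExponent p x = padicValInt p (tateQuadratic x.1 x.2) := by
  simp [localExponent, padicValInt.eq_zero_of_not_dvd hx1, padicValInt.eq_zero_of_not_dvd hx2, hp5]

omit [Fact p.Prime] in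
theorem intCast_pow_padicValInt_dvd {R : Type*} [CommRing R] (n : ℤ) :
    ((p : ℤ) : R) ^ padicValInt p n ∣ (n : R) := by
  simpa using map_dvd (Int.castRingHom R) (padicValInt_dvd (p := p) n)

theorem exists_root_dvd_sub_mul (hp5 : p ≠ 5) (hx2 : ¬ (p : ℤ) ∣ x.2)
    (hx : (p : ℤ) ∣ tateQuadratic x.1 x.2) (hy : (p : ℤ) ∣ tateQuadratic y.1 y.2)
    (hxy : localType p x = localType p y) :
    ∃ ρ : ℤ_[p], ρ * ρ = 1 + 11 * ρ ∧
      (p : ℤ_[p]) ∣ x.1 - ρ * x.2 ∧ (p : ℤ_[p]) ∣ y.1 - ρ * y.2 := by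
  have hρ := padicRoot_mul_self (exists_root_of_dvd_tateQuadratic hp5 hx2 hx)
  have hdvd_or {a b : ℤ} (h : (p : ℤ) ∣ tateQuadratic a b) :
      (p : ℤ_[p]) ∣ a - padicRoot p * b ∨ (p : ℤ_[p]) ∣ a - (11 - padicRoot p) * b := by
    rw [← natCast_dvd_intCast_padicInt_iff, intCast_tateQuadratic, tateQuadratic_eq_mul hρ] at h
    exact PadicInt.prime_p.dvd_or_dvd h
  have hiff : (p : ℤ_[p]) ∣ x.1 - padicRoot p * x.2 ↔ (p : ℤ_[p]) ∣ y.1 - padicRoot p * y.2 :=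
    (congrFun hxy 2).to_iff
  by_cases hxρ : (p : ℤ_[p]) ∣ x.1 - padicRoot p * x.2
  · exact ⟨_, hρ, hxρ, hiff.mp hxρ⟩
  · exact ⟨_, eleven_sub_mul_self hρ, (hdvd_or hx).resolve_left hxρ,
      (hdvd_or hy).resolve_left (mt hiff.mpr hxρ)⟩

theorem pow_min_localExponent_dvd_normDet (N : ℕ) (hx : IsCoprime x.1 x.2) (hy : IsCoprime y.1 y.2)
    (hxy : localType p x = localType p y) :
    (p : ℤ) ^ min (localExponent p y) ((2 * N + 1) * localExponent p x) ∣ normDet N x y := by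
  have h1 : (p : ℤ) ∣ x.1 ↔ (p : ℤ) ∣ y.1 := (congrFun hxy 0).to_iff
  have h2 : (p : ℤ) ∣ x.2 ↔ (p : ℤ) ∣ y.2 := (congrFun hxy 1).to_iff
  by_cases hx1 : (p : ℤ) ∣ x.1
  · rw [localExponent_of_dvd_fst hx hx1, localExponent_of_dvd_fst hy (h1.mp hx1)]
    exact pow_min_dvd_normDet N x y 0 (intCast_pow_padicValInt_dvd _)
      (intCast_pow_padicValInt_dvd _)
  by_cases hx2 : (p : ℤ) ∣ x.2
  · rw [localExponent_of_dvd_snd hx hx2, localExponent_of_dvd_snd hy (h2.mp hx2)]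
    exact pow_min_dvd_normDet N x y 1 ((intCast_pow_padicValInt_dvd _).mul_left _).neg_right
      ((intCast_pow_padicValInt_dvd _).mul_left _).neg_right
  have hy1 := mt h1.mpr hx1
  have hy2 := mt h2.mpr hx2
  obtain rfl | hp5 := eq_or_ne p 5
  · simp [localExponent, padicValInt.eq_zero_of_not_dvd hx1, padicValInt.eq_zero_of_not_dvd hx2]
  rw [localExponent_of_not_dvd hp5 hx1 hx2, localExponent_of_not_dvd hp5 hy1 hy2]
  by_cases hxQ : (p : ℤ) ∣ tateQuadratic x.1 x.2
  swap
  · simp [padicValInt.eq_zero_of_not_dvd hxQ]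
  by_cases hyQ : (p : ℤ) ∣ tateQuadratic y.1 y.2
  swap
  · simp [padicValInt.eq_zero_of_not_dvd hyQ]
  obtain ⟨ρ, hρ, hxρ, hyρ⟩ := exists_root_dvd_sub_mul hp5 hx2 hxQ hyQ hxy
  exact pow_min_dvd_normDet_of_root hρ N
    (pow_dvd_sub_root_mul hp5 hρ hx2 hxρ (padicValInt_dvd _))
    (pow_dvd_sub_root_mul hp5 hρ hy2 hyρ (padicValInt_dvd _))

end LocalDivisibility

section RealPlaces

/-- The two real roots of `ρ² = 11ρ + 1`, indexed by the real places of `ℚ(√5)`. -/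
noncomputable def realRoot (σ : Bool) : ℝ := (11 + (bif σ then 5 * √5 else -(5 * √5))) / 2

theorem realRoot_mul_self (σ : Bool) : realRoot σ * realRoot σ = 1 + 11 * realRoot σ := by
  have h5 := Real.mul_self_sqrt (show (0 : ℝ) ≤ 5 by norm_num)
  cases σ <;> simp only [realRoot, cond_true, cond_false] <;> linear_combination 25 / 4 * h5

theorem eleven_sub_realRoot (σ : Bool) : 11 - realRoot σ = realRoot !σ := by
  cases σ <;> simp only [realRoot, Bool.not_true, Bool.not_false, cond_true, cond_false] <;> ring

theorem realRoot_ne_zero (σ : Bool) : realRoot σ ≠ 0 := fun h ↦ by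
  simpa [h] using realRoot_mul_self σ

theorem prod_rootTriple_realRoot (x : ℤ × ℤ) (i : Fin 3) :
    ∏ σ, rootTriple (realRoot σ) x i =
      (![x.1 ^ 2, -x.2 ^ 2, tateQuadratic x.1 x.2] i : ℤ) := by
  have h := realRoot_mul_self true
  rw [Fintype.prod_bool, ← Bool.not_true, ← eleven_sub_realRoot]
  fin_cases i
  · simp [rootTriple, pow_two]
  · simp only [rootTriple, Fin.mk_one, Matrix.cons_val]
    push_cast
    linear_combination -(x.2 : ℝ) ^ 2 * h
  · simp only [rootTriple, Fin.reduceFinMk, Matrix.cons_val]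
    rw [intCast_tateQuadratic, tateQuadratic_eq_mul h]
    ring

theorem intCast_normDet_eq_prod (N : ℕ) (x y : ℤ × ℤ) :
    (normDet N x y : ℝ) =
      ∏ σ, padeDet N (rootTriple (realRoot σ) x) (rootTriple (realRoot σ) y) := by
  rw [Fintype.prod_bool, intCast_normDet (realRoot_mul_self true), eleven_sub_realRoot,
    Bool.not_true]

/-- The logarithmic height over `ℚ(√5)` of the triples attached to a coprime pair, to which only
the real places contribute. -/
noncomputable def logHeight (x : ℤ × ℤ) : ℝ := ∑ σ, Real.log ‖rootTriple (realRoot σ) x‖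

end RealPlaces

section SUnitSolutions

instance (p : Nat.Primes) : Fact p.1.Prime := ⟨p.2⟩

/-- Coprime pairs `(a, b)` for which `ab(a² - 11ab - b²)` is an `S`-unit. -/
structure IsSUnitSolution (S : Finset Nat.Primes) (x : ℤ × ℤ) : Prop where
  isCoprime : IsCoprime x.1 x.2
  fst_ne_zero : x.1 ≠ 0
  snd_ne_zero : x.2 ≠ 0
  tateQuadratic_ne_zero : tateQuadratic x.1 x.2 ≠ 0
  mem_of_dvd : ∀ p : Nat.Primes, (p : ℤ) ∣ x.1 * x.2 * tateQuadratic x.1 x.2 → p ∈ S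

variable {S : Finset Nat.Primes} {x y : ℤ × ℤ}

theorem IsSUnitSolution.rootTriple_ne_zero (hx : IsSUnitSolution S x) (σ : Bool) (i : Fin 3) :
    rootTriple (realRoot σ) x i ≠ 0 := by
  refine Finset.prod_ne_zero_iff.mp (?_ : ∏ σ, rootTriple (realRoot σ) x i ≠ 0) σ
    (Finset.mem_univ σ)
  rw [prod_rootTriple_realRoot, Int.cast_ne_zero]
  fin_cases i <;>
    simp [hx.fst_ne_zero, hx.snd_ne_zero, hx.tateQuadratic_ne_zero]

theorem sq_le_exp_logHeight (hx : IsSUnitSolution S x) :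
    (x.1 : ℝ) ^ 2 ≤ Real.exp (logHeight x) ∧ (x.2 : ℝ) ^ 2 ≤ Real.exp (logHeight x) := by
  have hprod (i : Fin 3) :
      |((![x.1 ^ 2, -x.2 ^ 2, tateQuadratic x.1 x.2] i : ℤ) : ℝ)| ≤ Real.exp (logHeight x) := by
    rw [← prod_rootTriple_realRoot, Finset.abs_prod, logHeight, Real.exp_sum]
    refine Finset.prod_le_prod (fun _ _ ↦ abs_nonneg _) fun σ _ ↦ ?_
    rw [Real.exp_log (norm_pos_of_apply_ne_zero (hx.rootTriple_ne_zero σ i))]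
    exact abs_apply_le_norm _ i
  exact ⟨by simpa using hprod 0, by simpa using hprod 1⟩

theorem sum_padicValInt_mul_log {n : ℤ} (hS : ∀ p : Nat.Primes, (p : ℤ) ∣ n → p ∈ S) :
    ∑ p ∈ S, (padicValInt p n : ℝ) * Real.log p = Real.log |(n : ℝ)| := by
  have hsupp : n.natAbs.factorization.support ⊆ S.map ⟨(↑), Nat.Primes.coe_nat_injective⟩ := by
    intro p hp
    rw [Nat.support_factorization, Nat.mem_primeFactors] at hp
    exact Finset.mem_map.mpr ⟨⟨p, hp.1⟩, hS ⟨p, hp.1⟩ (Int.natCast_dvd.mpr hp.2.1), rfl⟩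
  rw [← Int.cast_abs, Int.abs_eq_natAbs, Int.cast_natCast, Real.log_nat_eq_sum_factorization,
    Finsupp.sum_of_support_subset _ hsupp _ (by simp), Finset.sum_map]
  refine Finset.sum_congr rfl fun p _ ↦ ?_
  simp only [padicValInt, ← Nat.factorization_def _ p.2]
  rfl

/-- The local contribution of each prime of `S` and of each real place to the logarithmic height. -/
noncomputable def weight (S : Finset Nat.Primes) (x : ℤ × ℤ) : S ⊕ Bool → ℝ :=
  Sum.elim (fun p ↦ localExponent p x * Real.log p)
    fun σ ↦ logDefect (rootTriple (realRoot σ) x) (minIndex (rootTriple (realRoot σ) x))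

theorem weight_nonneg (hx : IsSUnitSolution S x) (v : S ⊕ Bool) : 0 ≤ weight S x v := by
  rcases v with p | σ
  · exact mul_nonneg (Nat.cast_nonneg _) (Real.log_natCast_nonneg _)
  · exact logDefect_nonneg (hx.rootTriple_ne_zero σ _)

theorem sum_localExponent_mul_log (hx : IsSUnitSolution S x) (h5 : ⟨5, Nat.prime_five⟩ ∈ S) :
    ∑ p ∈ S, (localExponent p x : ℝ) * Real.log p =
      2 * Real.log |(x.1 : ℝ)| + 2 * Real.log |(x.2 : ℝ)| +
        Real.log |(tateQuadratic x.1 x.2 : ℝ)| -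
        padicValInt 5 (tateQuadratic x.1 x.2) * Real.log 5 := by
  have hfive : (padicValInt 5 (tateQuadratic x.1 x.2) : ℝ) * Real.log 5 =
      ∑ p ∈ S, if (p : ℕ) = 5 then
        (padicValInt p (tateQuadratic x.1 x.2) : ℝ) * Real.log p else 0 := by
    rw [Finset.sum_eq_single_of_mem _ h5 fun p _ hp ↦ if_neg (mt Subtype.ext hp), if_pos rfl,
      Nat.cast_ofNat]
  rw [← intCast_tateQuadratic, hfive,
    ← sum_padicValInt_mul_log fun p hp ↦ hx.mem_of_dvd p ((hp.mul_right _).mul_right _),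
    ← sum_padicValInt_mul_log fun p hp ↦ hx.mem_of_dvd p ((hp.mul_left _).mul_right _),
    ← sum_padicValInt_mul_log fun p hp ↦ hx.mem_of_dvd p (hp.mul_left _),
    Finset.mul_sum, Finset.mul_sum, ← Finset.sum_add_distrib, ← Finset.sum_add_distrib,
    ← Finset.sum_sub_distrib]
  refine Finset.sum_congr rfl fun p _ ↦ ?_
  rw [localExponent]
  split_ifs <;> push_cast <;> ring

theorem sum_log_abs_rootTriple (hx : IsSUnitSolution S x) :
    ∑ σ, ∑ i, Real.log |rootTriple (realRoot σ) x i| =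
      2 * Real.log |(x.1 : ℝ)| + 2 * Real.log |(x.2 : ℝ)| +
        Real.log |(tateQuadratic x.1 x.2 : ℝ)| := by
  rw [Finset.sum_comm]
  have hlog (i : Fin 3) : ∑ σ, Real.log |rootTriple (realRoot σ) x i| =
      Real.log |((![x.1 ^ 2, -x.2 ^ 2, tateQuadratic x.1 x.2] i : ℤ) : ℝ)| := by
    rw [← prod_rootTriple_realRoot, Finset.abs_prod,
      Real.log_prod fun σ _ ↦ abs_ne_zero.mpr (hx.rootTriple_ne_zero σ i)]
  simp only [hlog, Fin.sum_univ_three, Matrix.cons_val]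
  push_cast
  simp only [abs_neg, abs_pow, Real.log_pow, Nat.cast_ofNat, tateQuadratic]
  push_cast
  rfl

theorem sum_weight_add (hx : IsSUnitSolution S x) (h5 : ⟨5, Nat.prime_five⟩ ∈ S) :
    ∑ v, weight S x v + padicValInt 5 (tateQuadratic x.1 x.2) * Real.log 5 =
      ∑ σ, (∑ i, Real.log |rootTriple (realRoot σ) x i| +
        logDefect (rootTriple (realRoot σ) x) (minIndex (rootTriple (realRoot σ) x))) := by
  rw [Finset.sum_add_distrib, sum_log_abs_rootTriple hx, Fintype.sum_sum_type]
  simp only [weight, Sum.elim_inl, Sum.elim_inr]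
  rw [Finset.sum_coe_sort S fun p ↦ (localExponent p x : ℝ) * Real.log p,
    sum_localExponent_mul_log hx h5]
  ring

theorem sum_weight_le (hx : IsSUnitSolution S x) (h5 : ⟨5, Nat.prime_five⟩ ∈ S) :
    ∑ v, weight S x v ≤ 3 * logHeight x := by
  have hpos : 0 ≤ padicValInt 5 (tateQuadratic x.1 x.2) * Real.log 5 :=
    mul_nonneg (Nat.cast_nonneg _) (Real.log_nonneg (by norm_num))
  refine (le_add_of_nonneg_right hpos).trans ?_
  rw [sum_weight_add hx h5, logHeight, Finset.mul_sum]
  exact Finset.sum_le_sum fun σ _ ↦ sum_log_abs_add_logDefect_le (hx.rootTriple_ne_zero σ) _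

theorem padicValInt_five_tateQuadratic_le {a b : ℤ} (h : IsCoprime a b) :
    padicValInt 5 (tateQuadratic a b) ≤ 3 := by
  by_contra! hlt
  have : Fact (Nat.Prime 5) := ⟨Nat.prime_five⟩
  obtain ⟨k, hk⟩ : (5 : ℤ) ^ 4 ∣ tateQuadratic a b :=
    (padicValInt_dvd_iff 4 _).mpr (.inr hlt)
  have hp : Prime (5 : ℤ) := Int.prime_ofNat_iff.mpr Nat.prime_five
  have hsq : (2 * a - 11 * b) ^ 2 = 5 ^ 3 * (20 * k + b ^ 2) := by
    rw [tateQuadratic] at hk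
    linear_combination 4 * hk
  obtain ⟨u, hu⟩ : (5 : ℤ) ∣ 2 * a - 11 * b :=
    hp.dvd_of_dvd_pow (n := 2) (hsq ▸ (dvd_pow_self 5 three_ne_zero).mul_right _)
  rw [hu] at hsq
  obtain ⟨v, rfl⟩ : (5 : ℤ) ∣ u := hp.dvd_of_dvd_pow (n := 2) ⟨20 * k + b ^ 2, by linarith⟩
  have hb : (5 : ℤ) ∣ b := hp.dvd_of_dvd_pow (n := 2) ⟨v ^ 2 - 4 * k, by linarith⟩
  have ha : (5 : ℤ) ∣ a := by omega
  exact hp.not_isUnit (h.isUnit_of_dvd' ha hb)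

theorem le_sum_weight (hx : IsSUnitSolution S x) (h5 : ⟨5, Nat.prime_five⟩ ∈ S) :
    3 * logHeight x - 20 ≤ ∑ v, weight S x v := by
  have hlower := Finset.sum_le_sum fun σ (_ : σ ∈ Finset.univ) ↦
    le_sum_log_abs_add_logDefect (hx.rootTriple_ne_zero σ) (sum_rootTriple (realRoot σ) x)
  rw [← sum_weight_add hx h5, Finset.sum_sub_distrib, ← Finset.mul_sum, ← logHeight,
    Fintype.sum_bool] at hlower
  have hval : (padicValInt 5 (tateQuadratic x.1 x.2) : ℝ) ≤ 3 := by
    exact_mod_cast padicValInt_five_tateQuadratic_le hx.isCoprime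
  have hlog5 : Real.log 5 ≤ 4 := (Real.log_le_sub_one_of_pos (by norm_num)).trans (by norm_num)
  have hval_mul : padicValInt 5 (tateQuadratic x.1 x.2) * Real.log 5 ≤ 3 * 4 :=
    mul_le_mul hval hlog5 (Real.log_nonneg (by norm_num)) zero_le_three
  linarith [Real.log_two_lt_d9]

theorem prod_pow_dvd_of_pow_dvd {n : ℤ} (e : Nat.Primes → ℕ)
    (h : ∀ p ∈ S, (p : ℤ) ^ e p ∣ n) : ∏ p ∈ S, (p : ℤ) ^ e p ∣ n :=
  Finset.prod_dvd_of_coprime (fun p _ q _ hpq ↦ (Nat.isCoprime_iff_coprime.mpr <|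
    (Nat.coprime_primes p.2 q.2).mpr <| mt Subtype.ext hpq).pow) h

theorem sum_min_localExponent_mul_log_le (hx : IsCoprime x.1 x.2) (hy : IsCoprime y.1 y.2)
    {N : ℕ} (hD : normDet N x y ≠ 0) (hxy : ∀ p : S, localType p x = localType p y) :
    ∑ p ∈ S, (min (localExponent p y) ((2 * N + 1) * localExponent p x) : ℕ) * Real.log p ≤
      Real.log |(normDet N x y : ℝ)| := by
  set e : Nat.Primes → ℕ := fun p ↦ min (localExponent p y) ((2 * N + 1) * localExponent p x)
  have hdvd : ∏ p ∈ S, (p : ℤ) ^ e p ∣ |normDet N x y| := (dvd_abs _ _).mpr <|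
    prod_pow_dvd_of_pow_dvd e fun p hp ↦ pow_min_localExponent_dvd_normDet N hx hy (hxy ⟨p, hp⟩)
  have hle : ∏ p ∈ S, (p : ℝ) ^ e p ≤ |(normDet N x y : ℝ)| := by
    exact_mod_cast Int.le_of_dvd (abs_pos.mpr hD) hdvd
  have hpos (p : Nat.Primes) : (0 : ℝ) < (p : ℝ) ^ e p := pow_pos (Nat.cast_pos.mpr p.2.pos) _
  simpa only [Real.log_prod fun p _ ↦ (hpos p).ne', Real.log_pow] using
    Real.log_le_log (Finset.prod_pos fun p _ ↦ hpos p) hle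

theorem sum_min_logDefect_le {N : ℕ} {i : Bool → Fin 3}
    (hx : ∀ σ, rootTriple (realRoot σ) x (i σ) ≠ 0) (hy : ∀ σ, rootTriple (realRoot σ) y (i σ) ≠ 0)
    (hD : normDet N x y ≠ 0) :
    ∑ σ, min (logDefect (rootTriple (realRoot σ) y) (i σ))
        ((2 * N + 1) * logDefect (rootTriple (realRoot σ) x) (i σ)) +
      Real.log |(normDet N x y : ℝ)| ≤
        logHeight y + (3 * N + 1) * logHeight x + (12 * N + 4) * Real.log 2 := by
  have hdet : ∏ σ, padeDet N (rootTriple (realRoot σ) x) (rootTriple (realRoot σ) y) ≠ 0 := by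
    rwa [← intCast_normDet_eq_prod, Int.cast_ne_zero]
  rw [Finset.prod_ne_zero_iff] at hdet
  have hlog (σ : Bool) := log_abs_padeDet_le N (sum_rootTriple (realRoot σ) x)
    (sum_rootTriple (realRoot σ) y) (hx σ) (hy σ) (hdet σ (Finset.mem_univ σ))
  rw [intCast_normDet_eq_prod, Finset.abs_prod,
    Real.log_prod fun σ hσ ↦ abs_ne_zero.mpr (hdet σ hσ)]
  simp only [logHeight, Fintype.sum_bool]
  linarith [hlog true, hlog false]

theorem sum_min_weight_le (hx : IsSUnitSolution S x) (hy : IsSUnitSolution S y) {N : ℕ}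
    (hD : normDet N x y ≠ 0) (htype : ∀ p : S, localType p x = localType p y)
    (hmin : ∀ σ, minIndex (rootTriple (realRoot σ) x) = minIndex (rootTriple (realRoot σ) y)) :
    ∑ v, min (weight S y v) ((2 * N + 1) * weight S x v) ≤
      logHeight y + (3 * N + 1) * logHeight x + (12 * N + 4) * Real.log 2 := by
  have hfin := sum_min_localExponent_mul_log_le hx.isCoprime hy.isCoprime hD htype
  have hinf := sum_min_logDefect_le (fun σ ↦ hx.rootTriple_ne_zero σ _)
    (fun σ ↦ hy.rootTriple_ne_zero σ (minIndex (rootTriple (realRoot σ) x))) hD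
  have hmul (p : Nat.Primes) : min (localExponent p y * Real.log p)
      ((2 * N + 1) * (localExponent p x * Real.log p)) =
      (min (localExponent p y) ((2 * N + 1) * localExponent p x) : ℕ) * Real.log p := by
    push_cast
    rw [← mul_assoc, min_mul_of_nonneg _ _ (Real.log_natCast_nonneg _)]
  rw [Fintype.sum_sum_type]
  simp only [weight, Sum.elim_inl, Sum.elim_inr, hmul, ← hmin]
  rw [Finset.sum_coe_sort S fun p ↦ ((min (localExponent p y)
    ((2 * N + 1) * localExponent p x) : ℕ) : ℝ) * Real.log p]
  linarith

theorem normDet_ne_zero_of_odd {N : ℕ} (hN : Odd N)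
    (hxy : ∀ σ i, 0 < rootTriple (realRoot σ) x i * rootTriple (realRoot σ) y i) :
    normDet N x y ≠ 0 := by
  rw [← Int.cast_ne_zero (α := ℝ), intCast_normDet_eq_prod, Finset.prod_ne_zero_iff]
  exact fun σ _ ↦ padeDet_ne_zero N hN (sum_rootTriple _ x) (sum_rootTriple _ y) (hxy σ)

theorem eq_of_mul_eq_mul_of_isCoprime (hx : IsCoprime x.1 x.2) (hy : IsCoprime y.1 y.2)
    (hpos : 0 < x.1 * y.1) (h : x.1 * y.2 = y.1 * x.2) : x = y := by
  have hassoc : Associated x.1 y.1 := associated_of_dvd_dvd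
    (hx.dvd_of_dvd_mul_right ⟨y.2, h.symm⟩) (hy.dvd_of_dvd_mul_right ⟨x.2, h⟩)
  have hfst : x.1 = y.1 := (Int.associated_iff.mp hassoc).resolve_right fun hneg ↦ by
    rw [hneg] at hpos
    nlinarith [sq_nonneg y.1]
  exact Prod.ext hfst (mul_left_cancel₀ (left_ne_zero_of_mul hpos.ne') (by rw [h, hfst]))

theorem normDet_zero_ne_zero (hx : IsCoprime x.1 x.2) (hy : IsCoprime y.1 y.2)
    (hpos : 0 < x.1 * y.1) (hxy : x ≠ y) : normDet 0 x y ≠ 0 := by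
  rw [← Int.cast_ne_zero (α := ℝ), intCast_normDet_eq_prod, Finset.prod_ne_zero_iff]
  intro σ _ h0
  rw [padeDet_zero] at h0
  have hmul : realRoot σ * (x.1 * y.2 - y.1 * x.2) = 0 := by
    convert h0 using 1
    simp only [rootTriple, Matrix.cons_val]
    ring
  have := (mul_eq_zero.mp hmul).resolve_left (realRoot_ne_zero σ)
  exact hxy (eq_of_mul_eq_mul_of_isCoprime hx hy hpos (by exact_mod_cast sub_eq_zero.mp this))

end SUnitSolutions

section GapPrinciple

variable {V : Type*} [Fintype V] {w w' : V → ℝ} {h h' : ℝ}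

/-- The vector `w / h`, discretized to the grid of mesh `1 / (4 |V|)`. -/
noncomputable def profile (w : V → ℝ) (h : ℝ) (v : V) : ℕ := ⌊4 * Fintype.card V * w v / h⌋₊

theorem profile_mul_le (hw : ∀ v, 0 ≤ w v) (hh : 0 < h) (v : V) :
    profile w h v * h ≤ 4 * Fintype.card V * w v := by
  rw [← le_div_iff₀ hh]
  have := hw v
  exact Nat.floor_le (by positivity)

theorem sum_profile_le (hw : ∀ v, 0 ≤ w v) (hh : 0 < h) {c : ℕ} (hsum : ∑ v, w v ≤ c * h) :
    ∑ v, profile w h v ≤ 4 * c * Fintype.card V := by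
  have hle := Finset.sum_le_sum fun v (_ : v ∈ Finset.univ) ↦ profile_mul_le hw hh v
  rw [← Finset.sum_mul, ← Finset.mul_sum] at hle
  have : ((∑ v, profile w h v : ℕ) : ℝ) ≤ (4 * c * Fintype.card V : ℕ) := by
    push_cast
    refine le_of_mul_le_mul_right (hle.trans ?_) hh
    calc 4 * Fintype.card V * ∑ v, w v ≤ 4 * Fintype.card V * (c * h) := by gcongr
      _ = 4 * c * Fintype.card V * h := by ring
  exact_mod_cast this

theorem le_sum_profile (hh : 0 < h) :
    4 * Fintype.card V * ∑ v, w v ≤ (∑ v, (profile w h v : ℝ) + Fintype.card V) * h := by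
  have hcard : (Fintype.card V : ℝ) = ∑ _v : V, 1 := by simp
  rw [hcard, ← Finset.sum_add_distrib, ← hcard, Finset.mul_sum, Finset.sum_mul]
  refine Finset.sum_le_sum fun v _ ↦ ?_
  rw [← div_le_iff₀ hh]
  exact (Nat.lt_floor_add_one _).le

theorem min_mul_sum_profile_le (hw : ∀ v, 0 ≤ w v) (hw' : ∀ v, 0 ≤ w' v) (hh : 0 < h)
    (hh' : 0 < h') (heq : profile w h = profile w' h') {c : ℝ} (hc : 0 ≤ c) :
    min h' (c * h) * ∑ v, (profile w h v : ℝ) ≤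
      4 * Fintype.card V * ∑ v, min (w' v) (c * w v) := by
  rw [Finset.mul_sum, Finset.mul_sum]
  refine Finset.sum_le_sum fun v _ ↦ ?_
  rw [min_mul_of_nonneg _ _ (Nat.cast_nonneg _), mul_min_of_nonneg _ _ (by positivity)]
  refine min_le_min ?_ ?_
  · rw [heq, mul_comm]
    exact profile_mul_le hw' hh' v
  · calc c * h * profile w h v = c * (profile w h v * h) := by ring
      _ ≤ c * (4 * Fintype.card V * w v) :=
        mul_le_mul_of_nonneg_left (profile_mul_le hw hh v) hc
      _ = 4 * Fintype.card V * (c * w v) := by ring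

theorem mul_min_le_sum_min [Nonempty V] (hw : ∀ v, 0 ≤ w v) (hw' : ∀ v, 0 ≤ w' v) (hh : 0 < h)
    (hh' : 0 < h') (heq : profile w h = profile w' h') {r c : ℝ} (hr : r * h ≤ ∑ v, w v)
    (hc : 0 ≤ c) :
    (r - 1 / 4) * min h' (c * h) ≤ ∑ v, min (w' v) (c * w v) := by
  have : (0 : ℝ) < Fintype.card V := Nat.cast_pos.mpr Fintype.card_pos
  have : 0 ≤ min h' (c * h) := le_min hh'.le (by positivity)
  have hlower : 4 * Fintype.card V * (r - 1 / 4) ≤ ∑ v, (profile w h v : ℝ) := by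
    have : 4 * Fintype.card V * (r * h) ≤ 4 * Fintype.card V * ∑ v, w v := by gcongr
    refine le_of_mul_le_mul_right ?_ hh
    linarith [le_sum_profile (w := w) hh]
  refine le_of_mul_le_mul_left ?_ (show (0 : ℝ) < 4 * Fintype.card V by positivity)
  calc 4 * Fintype.card V * ((r - 1 / 4) * min h' (c * h))
      = min h' (c * h) * (4 * Fintype.card V * (r - 1 / 4)) := by ring
    _ ≤ min h' (c * h) * ∑ v, (profile w h v : ℝ) := by gcongr
    _ ≤ _ := min_mul_sum_profile_le hw hw' hh hh' heq hc

theorem exists_odd_two_mul_add_one_le {τ : ℝ} (hτ : 27 ≤ τ) :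
    ∃ N : ℕ, Odd N ∧ 13 ≤ N ∧ 2 * (N : ℝ) + 1 ≤ τ ∧ τ < 2 * N + 5 := by
  set k := ⌊(τ - 27) / 4⌋₊
  have hle : k ≤ (τ - 27) / 4 := Nat.floor_le (by linarith)
  have hlt : (τ - 27) / 4 < k + 1 := Nat.lt_floor_add_one _
  refine ⟨2 * k + 13, ⟨k + 6, by ring⟩, by omega, ?_, ?_⟩ <;> push_cast <;> linarith

theorem floor_three_mul_log_mod_ne (hh : 1 ≤ h) (hlower : 3 / 2 * h ≤ h') (hupper : h' < 27 * h) :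
    ⌊3 * Real.log h⌋₊ % 16 ≠ ⌊3 * Real.log h'⌋₊ % 16 := by
  have hlog_lower : 1 / 3 ≤ Real.log (3 / 2) :=
    le_trans (by norm_num) (Real.one_sub_inv_le_log_of_pos (by norm_num : (0 : ℝ) < 3 / 2))
  have hlog_upper : Real.log 27 ≤ 5 := by
    have : Real.log 27 ≤ Real.log (2 ^ 5) := Real.log_le_log (by norm_num) (by norm_num)
    rw [Real.log_pow] at this
    push_cast at this
    linarith [Real.log_two_lt_d9]
  have hmul_lower := Real.log_le_log (by positivity) hlower
  have hmul_upper := Real.log_lt_log (by linarith) hupper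
  rw [Real.log_mul (by norm_num) (by positivity)] at hmul_lower hmul_upper
  have hlt : ⌊3 * Real.log h⌋₊ + 1 ≤ ⌊3 * Real.log h'⌋₊ := by
    rw [← Nat.floor_add_one (mul_nonneg zero_le_three (Real.log_nonneg hh))]
    exact Nat.floor_le_floor (by linarith)
  have hle : ⌊3 * Real.log h'⌋₊ ≤ ⌊3 * Real.log h⌋₊ + 15 := by
    rw [← Nat.floor_add_ofNat (mul_nonneg zero_le_three (Real.log_nonneg hh))]
    exact Nat.floor_le_floor (by linarith)
  omega

theorem encard_setOf_sum_le (V : Type*) [Fintype V] (M : ℕ) :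
    {e : V → ℕ | ∑ v, e v ≤ M}.encard ≤ 2 ^ (M + Fintype.card V) := by
  classical
  let slack (e : V → ℕ) : Option V →₀ ℕ :=
    Finsupp.equivFunOnFinite.symm fun v ↦ v.elim (M - ∑ v, e v) e
  have hmaps : Set.MapsTo slack {e | ∑ v, e v ≤ M}
      (Finset.finsuppAntidiag (Finset.univ : Finset (Option V)) M) := fun e he ↦ by
    rw [Finset.mem_coe, Finset.mem_finsuppAntidiag]
    exact ⟨by simpa [slack, Fintype.sum_option] using Nat.sub_add_cancel he,
      Finset.subset_univ _⟩
  have hinj : Function.Injective slack := fun e e' he ↦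
    funext fun v ↦ by simpa [slack] using DFunLike.congr_fun he (some v)
  refine (Set.encard_le_encard_of_injOn hmaps hinj.injOn).trans ?_
  rw [Set.encard_coe_eq_coe_finsetCard, Finset.card_finsuppAntidiag_nat_eq_choose,
    Finset.card_univ, Fintype.card_option, add_right_comm, Nat.add_sub_cancel, add_comm]
  exact_mod_cast Nat.choose_le_two_pow _ _

end GapPrinciple

section CountingSolutions

variable {S : Finset Nat.Primes} {x y : ℤ × ℤ}

/-- The data separating the `S`-unit solutions of large height: the signs of the real triples, the
positions of their smallest entries, the local types, the height on a logarithmic scale modulo `16`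
and the profile of the weights. -/
noncomputable def solutionClass (S : Finset Nat.Primes) (x : ℤ × ℤ) :
    ((Bool → Fin 3 → Prop) × (Bool → Fin 3) × (S → Fin 3 → Prop) × Fin 16) × (S ⊕ Bool → ℕ) :=
  ((fun σ i ↦ 0 < rootTriple (realRoot σ) x i, fun σ ↦ minIndex (rootTriple (realRoot σ) x),
    fun p ↦ localType p x, Fin.ofNat 16 ⌊3 * Real.log (logHeight x)⌋₊),
    profile (weight S x) (logHeight x))

theorem rootTriple_mul_pos (hx : IsSUnitSolution S x) (hy : IsSUnitSolution S y)
    (hxy : solutionClass S x = solutionClass S y) (σ : Bool) (i : Fin 3) :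
    0 < rootTriple (realRoot σ) x i * rootTriple (realRoot σ) y i := by
  have hsign : 0 < rootTriple (realRoot σ) x i ↔ 0 < rootTriple (realRoot σ) y i :=
    iff_of_eq (congrFun₂ (congrArg (·.1.1) hxy) σ i)
  rcases (hx.rootTriple_ne_zero σ i).lt_or_gt with h | h
  · exact mul_pos_of_neg_of_neg h <|
      (not_lt.mp (mt hsign.mpr h.not_gt)).lt_of_ne (hy.rootTriple_ne_zero σ i)
  · exact mul_pos h (hsign.mp h)

theorem mul_min_logHeight_le (hx : IsSUnitSolution S x) (hy : IsSUnitSolution S y)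
    (h5 : ⟨5, Nat.prime_five⟩ ∈ S) (hxy : solutionClass S x = solutionClass S y)
    (hlarge : 1000 ≤ logHeight x) (hle : logHeight x ≤ logHeight y) {N : ℕ}
    (hD : normDet N x y ≠ 0) :
    273 / 100 * min (logHeight y) ((2 * N + 1) * logHeight x) ≤
      logHeight y + (3 * N + 1) * logHeight x + (12 * N + 4) := by
  have hsum : 298 / 100 * logHeight x ≤ ∑ v, weight S x v := by linarith [le_sum_weight hx h5]
  have hlower := mul_min_le_sum_min (weight_nonneg hx) (weight_nonneg hy) (by linarith)
    (by linarith) (congrArg Prod.snd hxy) hsum (c := 2 * N + 1) (by positivity)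
  have hupper := sum_min_weight_le hx hy hD (congrFun (congrArg (·.1.2.2.1) hxy))
    (congrFun (congrArg (·.1.2.1) hxy))
  have hlog : (12 * N + 4) * Real.log 2 ≤ (12 * N + 4) * 1 := by
    have := Real.log_two_lt_d9
    gcongr
    linarith
  rw [show (298 / 100 - 1 / 4 : ℝ) = 273 / 100 by norm_num] at hlower
  linarith

theorem three_halves_mul_logHeight_le (hx : IsSUnitSolution S x) (hy : IsSUnitSolution S y)
    (h5 : ⟨5, Nat.prime_five⟩ ∈ S) (hxy : solutionClass S x = solutionClass S y)
    (hlarge : 1000 ≤ logHeight x) (hle : logHeight x ≤ logHeight y) (hne : x ≠ y) :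
    3 / 2 * logHeight x ≤ logHeight y := by
  have hpos : 0 < x.1 * y.1 := by
    have := rootTriple_mul_pos hx hy hxy true 0
    simp only [rootTriple, Matrix.cons_val_zero] at this
    exact_mod_cast this
  have h := mul_min_logHeight_le hx hy h5 hxy hlarge hle
    (normDet_zero_ne_zero hx.isCoprime hy.isCoprime hpos hne)
  rw [Nat.cast_zero, mul_zero, zero_add, one_mul, min_eq_right hle] at h
  linarith

theorem logHeight_lt_mul (hx : IsSUnitSolution S x) (hy : IsSUnitSolution S y)
    (h5 : ⟨5, Nat.prime_five⟩ ∈ S) (hxy : solutionClass S x = solutionClass S y)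
    (hlarge : 1000 ≤ logHeight x) (hle : logHeight x ≤ logHeight y) :
    logHeight y < 27 * logHeight x := by
  by_contra! hcon
  have hpos : 0 < logHeight x := by linarith
  obtain ⟨N, hodd, hN, hlower, hupper⟩ :=
    exists_odd_two_mul_add_one_le ((le_div_iff₀ hpos).mpr hcon)
  rw [le_div_iff₀ hpos] at hlower
  rw [div_lt_iff₀ hpos] at hupper
  have h := mul_min_logHeight_le hx hy h5 hxy hlarge hle
    (normDet_ne_zero_of_odd hodd (rootTriple_mul_pos hx hy hxy))
  rw [min_eq_right hlower] at h
  have hN' : (13 : ℝ) ≤ N := by exact_mod_cast hN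
  nlinarith [hN']

theorem injOn_solutionClass (h5 : ⟨5, Nat.prime_five⟩ ∈ S) :
    Set.InjOn (solutionClass S) {x | IsSUnitSolution S x ∧ 1000 ≤ logHeight x} := by
  suffices h : ∀ x y, IsSUnitSolution S x → IsSUnitSolution S y → 1000 ≤ logHeight x →
      logHeight x ≤ logHeight y → solutionClass S x = solutionClass S y → x = y by
    rintro x ⟨hx, hxlarge⟩ y ⟨hy, hylarge⟩ hxy
    rcases le_total (logHeight x) (logHeight y) with hle | hle
    · exact h x y hx hy hxlarge hle hxy
    · exact (h y x hy hx hylarge hle hxy.symm).symm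
  intro x y hx hy hlarge hle hxy
  by_contra hne
  refine floor_three_mul_log_mod_ne (by linarith)
    (three_halves_mul_logHeight_le hx hy h5 hxy hlarge hle hne)
    (logHeight_lt_mul hx hy h5 hxy hlarge hle) ?_
  exact congrArg (fun k ↦ (k.1.2.2.2 : ℕ)) hxy

theorem encard_setOf_large_le (h5 : ⟨5, Nat.prime_five⟩ ∈ S) :
    {x | IsSUnitSolution S x ∧ 1000 ≤ logHeight x}.encard ≤
      (9216 * 8 ^ S.card * 2 ^ (13 * (S.card + 2)) : ℕ) := by
  have hcard : Fintype.card (S ⊕ Bool) = S.card + 2 := by simp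
  have hmaps : Set.MapsTo (solutionClass S) {x | IsSUnitSolution S x ∧ 1000 ≤ logHeight x}
      (Set.univ ×ˢ {e | ∑ v, e v ≤ 12 * (S.card + 2)}) := fun x ⟨hx, hlarge⟩ ↦
    ⟨Set.mem_univ _, hcard ▸ sum_profile_le (c := 3) (weight_nonneg hx) (by linarith)
      (by exact_mod_cast sum_weight_le hx h5)⟩
  refine (Set.encard_le_encard_of_injOn hmaps (injOn_solutionClass h5)).trans ?_
  have hprofile := encard_setOf_sum_le (S ⊕ Bool) (12 * (S.card + 2))
  rw [hcard, ← Nat.succ_mul] at hprofile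
  have hinvariants : Fintype.card ((Bool → Fin 3 → Prop) × (Bool → Fin 3) ×
      (S → Fin 3 → Prop) × Fin 16) = 9216 * 8 ^ S.card := by
    simp only [Fintype.card_prod, Fintype.card_fun, Fintype.card_prop,
      Fintype.card_bool, Fintype.card_fin, Fintype.card_coe]
    ring
  rw [Set.encard_prod, Set.encard_univ, ENat.card_eq_coe_fintype_card, hinvariants, Nat.cast_mul]
  exact mul_le_mul_right (by exact_mod_cast hprofile) _

theorem encard_setOf_small_le (k : ℕ) :
    {x | IsSUnitSolution S x ∧ logHeight x ≤ 2 * k}.encard ≤ (9 * 7 ^ (2 * k) : ℕ) := by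
  have hexp : Real.exp (2 * k) ≤ (7 ^ k) ^ 2 := by
    rw [← pow_mul, mul_comm k, ← Nat.cast_ofNat (n := 2), ← Nat.cast_mul, ← Real.exp_one_pow]
    exact pow_le_pow_left₀ (Real.exp_pos 1).le (by linarith [Real.exp_one_lt_d9]) _
  have hmem {a : ℤ} {h : ℝ} (ha : (a : ℝ) ^ 2 ≤ Real.exp h) (hh : h ≤ 2 * k) :
      a ∈ Finset.Icc (-7 ^ k : ℤ) (7 ^ k) := by
    have := abs_le_of_sq_le_sq' (ha.trans ((Real.exp_le_exp.mpr hh).trans hexp)) (by positivity)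
    rw [Finset.mem_Icc]
    exact_mod_cast this
  have hsub : {x | IsSUnitSolution S x ∧ logHeight x ≤ 2 * k} ⊆
      (Finset.Icc (-7 ^ k : ℤ) (7 ^ k) ×ˢ Finset.Icc (-7 ^ k : ℤ) (7 ^ k) : Finset (ℤ × ℤ)) :=
    fun x ⟨hx, hsmall⟩ ↦ Finset.mem_product.mpr
      ⟨hmem (sq_le_exp_logHeight hx).1 hsmall, hmem (sq_le_exp_logHeight hx).2 hsmall⟩
  refine (Set.encard_le_encard hsub).trans ?_
  rw [Set.encard_coe_eq_coe_finsetCard, Finset.card_product, Int.card_Icc, Nat.cast_le]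
  have hside : ((7 : ℤ) ^ k + 1 - -7 ^ k).toNat ≤ 3 * 7 ^ k := by
    have : (1 : ℤ) ≤ 7 ^ k := one_le_pow₀ (by norm_num)
    rw [Int.toNat_le]
    push_cast
    linarith
  calc _ ≤ 3 * 7 ^ k * (3 * 7 ^ k) := Nat.mul_le_mul hside hside
    _ = 9 * 7 ^ (2 * k) := by ring

theorem encard_setOf_isSUnitSolution_le (h5 : ⟨5, Nat.prime_five⟩ ∈ S) :
    {x | IsSUnitSolution S x}.encard ≤
      (9 * 7 ^ (2 * 500) + 9216 * 8 ^ S.card * 2 ^ (13 * (S.card + 2)) : ℕ) := by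
  have hsub : {x | IsSUnitSolution S x} ⊆ {x | IsSUnitSolution S x ∧ logHeight x ≤ 2 * (500 : ℕ)} ∪
      {x | IsSUnitSolution S x ∧ 1000 ≤ logHeight x} := fun x hx ↦ by
    rcases le_total (logHeight x) 1000 with h | h
    · exact .inl ⟨hx, by norm_num [h]⟩
    · exact .inr ⟨hx, h⟩
  rw [Nat.cast_add]
  exact (Set.encard_le_encard hsub).trans <| (Set.encard_union_le _ _).trans <|
    add_le_add (encard_setOf_small_le 500) (encard_setOf_large_le h5)

theorem two_mul_count_le {k n s t : ℕ} (hkn : k + 2 ≤ n) (hst : s ≤ t + 1) :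
    2 * (9 * 7 ^ k + 9216 * 8 ^ s * 2 ^ (13 * (s + 2))) ≤ 7 ^ n + 6 * 7 ^ (20 * (t + 1)) := by
  have hsmall : 2 * (9 * 7 ^ k) ≤ 7 ^ n := by
    calc 2 * (9 * 7 ^ k) ≤ 7 ^ (k + 2) := by rw [pow_add]; omega
      _ ≤ 7 ^ n := Nat.pow_le_pow_right (by norm_num) hkn
  have hlarge : 2 * (9216 * 8 ^ s * 2 ^ (13 * (s + 2))) ≤ 6 * 7 ^ (20 * (t + 1)) := by
    calc 2 * (9216 * 8 ^ s * 2 ^ (13 * (s + 2)))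
        = 18432 * 2 ^ 26 * (2 ^ 16) ^ s := by
          rw [mul_add, pow_add, pow_mul, show 2 ^ 16 = 8 * 2 ^ 13 by norm_num, mul_pow]
          ring
      _ ≤ 6 * 2 ^ 40 * (2 ^ 16) ^ (t + 1) :=
          Nat.mul_le_mul (by norm_num) (Nat.pow_le_pow_right (by norm_num) hst)
      _ ≤ 6 * (2 ^ 40) ^ (t + 1) * (2 ^ 16) ^ (t + 1) :=
          Nat.mul_le_mul_right _ (Nat.mul_le_mul_left _ (Nat.le_self_pow t.succ_ne_zero _))
      _ = 6 * (2 ^ 56) ^ (t + 1) := by rw [mul_assoc, ← mul_pow, ← pow_add]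
      _ ≤ 6 * 7 ^ (20 * (t + 1)) := by
          rw [pow_mul]
          exact Nat.mul_le_mul_left _ (Nat.pow_le_pow_left (by norm_num) _)
  linarith

end CountingSolutions

section TateParameters

/-- The invariant `c₄` of the universal elliptic curve with a point of order `5`, homogenized. -/
def tateQuartic {R : Type*} [CommRing R] (a b : R) : R :=
  a ^ 4 - 12 * a ^ 3 * b + 14 * a ^ 2 * b ^ 2 + 12 * a * b ^ 3 + b ^ 4

/-- The curve `Y² = X³ + AX + B`. -/
abbrev shortWeierstrass {K : Type*} [CommRing K] (A B : K) : WeierstrassCurve.Affine K :=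
  ⟨0, 0, 0, A, B⟩

variable {K : Type*} [Field K] [DecidableEq K] {A B : K}

theorem exists_slope_of_add_self_eq {x y X Y : K} (h : (shortWeierstrass A B).Nonsingular x y)
    (H : (shortWeierstrass A B).Nonsingular X Y)
    (hdouble : Affine.Point.some x y h + Affine.Point.some x y h = Affine.Point.some X Y H) :
    ∃ s, 2 * y * s = 3 * x ^ 2 + A ∧ X = s ^ 2 - 2 * x ∧ Y = -(s * (X - x) + y) := by
  have hy : y ≠ (shortWeierstrass A B).negY x y := fun hy ↦
    Affine.Point.some_ne_zero _ (hdouble.symm.trans (Affine.Point.add_self_of_Y_eq hy))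
  rw [Affine.Point.add_self_of_Y_ne hy, Affine.Point.some.injEq] at hdouble
  obtain ⟨rfl, rfl⟩ := hdouble
  have hsub : y - (shortWeierstrass A B).negY x y = 2 * y := by
    simp only [Affine.negY]
    ring
  refine ⟨(shortWeierstrass A B).slope x x y y, ?_, ?_, ?_⟩
  · rw [Affine.slope_of_Y_ne rfl hy, ← hsub, mul_div_cancel₀ _ (sub_ne_zero.mpr hy)]
    ring
  · simp only [Affine.addX]
    ring
  · simp only [Affine.addY, Affine.negAddY, Affine.negY]
    ring

theorem exists_eq_tateQuartic_of_addOrderOf_eq_five [NeZero (2 : K)] [NeZero (3 : K)]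
    {P : (shortWeierstrass A B).Point} (hP : addOrderOf P = 5) :
    ∃ p q : K, -48 * A = tateQuartic p q ∧
      -16 * (4 * A ^ 3 + 27 * B ^ 2) = p ^ 5 * q ^ 5 * tateQuadratic p q := by
  have hzero : 5 • P = 0 := hP ▸ addOrderOf_nsmul_eq_zero P
  have hfour : (P + P) + (P + P) = -P := eq_neg_of_add_eq_zero_left (by rw [← hzero]; abel)
  rcases P with _ | ⟨x, y, h⟩
  · exact absurd hP (by simp [← Affine.Point.zero_def])
  rcases hdouble : Affine.Point.some x y h + Affine.Point.some x y h with _ | ⟨X, Y, H⟩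
  · rw [hdouble] at hfour
    simp [← Affine.Point.zero_def] at hfour
  rw [hdouble, Affine.Point.neg_some] at hfour
  obtain ⟨s, hs, hX, hY⟩ := exists_slope_of_add_self_eq h H hdouble
  obtain ⟨s', -, hx, hy⟩ := exists_slope_of_add_self_eq H _ hfour
  have heq : y ^ 2 = x ^ 3 + A * x + B := by simpa using (Affine.equation_iff _ _).mp h.1
  simp only [Affine.negY] at hy
  have hx' : x = (2 * s ^ 2 - s' ^ 2) / 3 := by
    rw [eq_div_iff three_ne_zero]
    linear_combination -hx + 2 * hX
  have hX' : X = (2 * s' ^ 2 - s ^ 2) / 3 := by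
    rw [eq_div_iff three_ne_zero]
    linear_combination -hX + 2 * hx
  have hy' : y = -((s + s') * (X - x)) / 2 := by
    rw [eq_div_iff two_ne_zero]
    linear_combination hY - hy
  have hA : A = 2 * y * s - 3 * x ^ 2 := by linear_combination -hs
  have hB : B = y ^ 2 - x ^ 3 - A * x := by linear_combination -heq
  refine ⟨s + s', s - s', ?_, ?_⟩
  · rw [hA, hy', hX', hx', tateQuartic]
    field
  · rw [hB, hA, hy', hX', hx', tateQuadratic]
    field

theorem exists_eq_mul_isCoprime (p q : ℚ) :
    ∃ (a b : ℤ) (u : ℚ), IsCoprime a b ∧ p = u * a ∧ q = u * b := by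
  rcases eq_or_ne q 0 with rfl | hq
  · exact ⟨1, 0, p, isCoprime_one_left, by simp, by simp⟩
  · refine ⟨(p / q).num, (p / q).den, q / (p / q).den, Rat.isCoprime_num_den _, ?_, ?_⟩
    · rw [div_mul_eq_mul_div, mul_div_assoc, Rat.num_div_den, mul_div_cancel₀ _ hq]
    · rw [Int.cast_natCast, div_mul_cancel₀ _ (Nat.cast_ne_zero.mpr (p / q).den_ne_zero)]

/-- The discriminant of `Y² = X³ + AX + B`, as a function of `(A, B)`. -/
def discriminant (E : ℤ × ℤ) : ℤ := -16 * (4 * E.1 ^ 3 + 27 * E.2 ^ 2)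

/-- For `E = (A, B)` and `x = (a, b)`: up to a scaling `u`, the curve `Y² = X³ + AX + B` has the
invariants `c₄` and `Δ` of the Tate normal form `Y² + (1 - t)XY - tY = X³ - tX²`, `t = a / b`. -/
def IsTateParameter (E x : ℤ × ℤ) : Prop :=
  ∃ u : ℚ, (-48 * E.1 : ℤ) = u ^ 4 * (tateQuartic x.1 x.2 : ℤ) ∧
    discriminant E = u ^ 12 * (x.1 ^ 5 * x.2 ^ 5 * tateQuadratic x.1 x.2 : ℤ)

theorem exists_isTateParameter {E : ℤ × ℤ} {P : (shortWeierstrass (E.1 : ℚ) (E.2 : ℚ)).Point}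
    (hP : addOrderOf P = 5) : ∃ x : ℤ × ℤ, IsCoprime x.1 x.2 ∧ IsTateParameter E x := by
  obtain ⟨p, q, hA, hdisc⟩ := exists_eq_tateQuartic_of_addOrderOf_eq_five hP
  obtain ⟨a, b, u, hab, rfl, rfl⟩ := exists_eq_mul_isCoprime p q
  refine ⟨(a, b), hab, u, ?_, ?_⟩
  · rw [tateQuartic] at hA ⊢
    push_cast
    linear_combination hA
  · simp only [discriminant, Int.cast_mul, intCast_tateQuadratic]
    push_cast
    rw [hdisc, tateQuadratic, tateQuadratic]
    ring

theorem IsTateParameter.eq {E E' x : ℤ × ℤ} (h : IsTateParameter E x) (h' : IsTateParameter E' x)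
    (hne : discriminant E ≠ 0) (hdisc : discriminant E = discriminant E')
    (hsign : 0 < E.2 ↔ 0 < E'.2) : E = E' := by
  obtain ⟨u, hA, hΔ⟩ := h
  obtain ⟨u', hA', hΔ'⟩ := h'
  have hD : ((x.1 ^ 5 * x.2 ^ 5 * tateQuadratic x.1 x.2 : ℤ) : ℚ) ≠ 0 :=
    right_ne_zero_of_mul (hΔ ▸ Int.cast_ne_zero.mpr hne)
  have hu : u ^ 4 = u' ^ 4 := by
    refine (Odd.strictMono_pow (by decide : Odd 3)).injective ?_
    simp only [← pow_mul]
    exact mul_right_cancel₀ hD (by rw [← hΔ, ← hΔ', hdisc])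
  have hfst : E.1 = E'.1 := by
    rw [hu, ← hA', Int.cast_inj] at hA
    omega
  have hsq : E.2 ^ 2 = E'.2 ^ 2 := by
    rw [discriminant, discriminant, hfst] at hdisc
    linarith
  refine Prod.ext hfst ?_
  rcases sq_eq_sq_iff_eq_or_eq_neg.mp hsq with h | h <;> omega

theorem isCoprime_fst_tateQuartic {R : Type*} [CommRing R] {a b : R} (h : IsCoprime a b) :
    IsCoprime a (tateQuartic a b) := by
  convert (h.pow_right (n := 4)).add_mul_left_right
    (a ^ 3 - 12 * a ^ 2 * b + 14 * a * b ^ 2 + 12 * b ^ 3) using 1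
  rw [tateQuartic]
  ring

theorem isCoprime_snd_tateQuartic {R : Type*} [CommRing R] {a b : R} (h : IsCoprime a b) :
    IsCoprime b (tateQuartic a b) := by
  convert (h.symm.pow_right (n := 4)).add_mul_left_right
    (-12 * a ^ 3 + 14 * a ^ 2 * b + 12 * a * b ^ 2 + b ^ 3) using 1
  rw [tateQuartic]
  ring

-- The resultant of the two forms is a power of `5`.
theorem dvd_five_of_dvd_tateQuartic {l a b : ℤ} (hl : Prime l) (hab : IsCoprime a b)
    (hquartic : l ∣ tateQuartic a b) (hdvd : l ∣ a * b * tateQuadratic a b) : l ∣ 5 := by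
  have not_dvd {m n : ℤ} (hmn : IsCoprime m n) (hn : l ∣ n) : ¬ l ∣ m := fun hm ↦
    hl.not_isUnit (hmn.isUnit_of_dvd' hm hn)
  have hquad : l ∣ tateQuadratic a b := (hl.dvd_or_dvd hdvd).resolve_left <|
    hl.not_dvd_mul (not_dvd (isCoprime_fst_tateQuartic hab) hquartic)
      (not_dvd (isCoprime_snd_tateQuartic hab) hquartic)
  have hmul : l ∣ 5 * b ^ 5 := by
    have : 5 * b ^ 5 = tateQuartic a b * (122 * b - 11 * a) + tateQuadratic a b *
        (605 * b ^ 3 - (a ^ 2 - a * b + 4 * b ^ 2) * (122 * b - 11 * a)) := by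
      rw [tateQuartic, tateQuadratic]
      ring
    exact this ▸ dvd_add (hquartic.mul_right _) (hquad.mul_right _)
  exact (hl.dvd_or_dvd hmul).resolve_right <|
    mt hl.dvd_of_dvd_pow (not_dvd (isCoprime_snd_tateQuadratic hab) hquad)

theorem mul_den_pow_eq_of_eq_pow_mul {m n : ℤ} {u : ℚ} {k : ℕ} (h : (m : ℚ) = u ^ k * n) :
    m * (u.den : ℤ) ^ k = u.num ^ k * n := by
  have : (m : ℚ) * (u.den : ℚ) ^ k = u.num ^ k * n := by
    rw [h, ← Rat.mul_den_eq_num]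
    ring
  exact_mod_cast this

theorem not_dvd_den_of_eq_pow_mul {l m n : ℤ} (hl : Prime l) {u : ℚ} {k : ℕ} (hk : k ≠ 0)
    (h : (m : ℚ) = u ^ k * n) (hn : ¬ l ∣ n) : ¬ l ∣ u.den := fun hden ↦ by
  have hdvd : l ∣ u.num ^ k * n :=
    mul_den_pow_eq_of_eq_pow_mul h ▸ (dvd_pow hden hk).mul_left _
  have hnum : l ∣ u.num := hl.dvd_of_dvd_pow ((hl.dvd_or_dvd hdvd).resolve_right hn)
  exact hl.not_isUnit ((Rat.isCoprime_num_den u).isUnit_of_dvd' hnum hden)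

theorem dvd_of_eq_pow_mul {l m n : ℤ} (hl : Prime l) {u : ℚ} {k : ℕ} (h : (m : ℚ) = u ^ k * n)
    (hden : ¬ l ∣ u.den) (hn : l ∣ n) : l ∣ m := by
  have hdvd : l ∣ m * (u.den : ℤ) ^ k := mul_den_pow_eq_of_eq_pow_mul h ▸ hn.mul_left _
  exact (hl.dvd_or_dvd hdvd).resolve_right (mt hl.dvd_of_dvd_pow hden)

theorem IsTateParameter.dvd_discriminant {E x : ℤ × ℤ} (h : IsTateParameter E x)
    (hx : IsCoprime x.1 x.2) {l : ℤ} (hl : Prime l) (h5 : ¬ l ∣ 5)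
    (hdvd : l ∣ x.1 * x.2 * tateQuadratic x.1 x.2) : l ∣ discriminant E := by
  obtain ⟨u, hA, hΔ⟩ := h
  refine dvd_of_eq_pow_mul hl hΔ (not_dvd_den_of_eq_pow_mul hl four_ne_zero hA
    fun hdvd' ↦ h5 (dvd_five_of_dvd_tateQuartic hl hx hdvd' hdvd)) (hdvd.trans ?_)
  exact ⟨x.1 ^ 4 * x.2 ^ 4, by ring⟩

/-- The set of prime divisors of an integer. -/
def primeDivisors (n : ℤ) : Finset Nat.Primes := n.natAbs.primeFactors.subtype Nat.Prime

theorem mem_primeDivisors {n : ℤ} (hn : n ≠ 0) {p : Nat.Primes} :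
    p ∈ primeDivisors n ↔ (p : ℤ) ∣ n := by
  have : p ∈ primeDivisors n ↔ p.1 ∈ n.natAbs.primeFactors := Finset.mem_subtype
  rw [this, Nat.mem_primeFactors_of_ne_zero (Int.natAbs_ne_zero.mpr hn), Int.natCast_dvd]
  exact and_iff_right p.2

theorem card_primeDivisors_five_mul_le (n : ℤ) :
    (primeDivisors (5 * n)).card ≤ n.natAbs.primeFactors.card + 1 := by
  refine ((Finset.card_subtype _ _).trans_le (Finset.card_filter_le _ _)).trans ?_
  rw [Int.natAbs_mul]
  rcases eq_or_ne n 0 with rfl | hn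
  · simp
  · rw [Nat.primeFactors_mul (by norm_num) (Int.natAbs_ne_zero.mpr hn), add_comm]
    exact (Finset.card_union_le _ _).trans (by simp [Nat.prime_five.primeFactors])

theorem IsTateParameter.isSUnitSolution {E x : ℤ × ℤ} (h : IsTateParameter E x)
    (hx : IsCoprime x.1 x.2) (hne : discriminant E ≠ 0) :
    IsSUnitSolution (primeDivisors (5 * discriminant E)) x := by
  have hD : x.1 ^ 5 * x.2 ^ 5 * tateQuadratic x.1 x.2 ≠ 0 := by
    obtain ⟨u, -, hΔ⟩ := h
    exact Int.cast_ne_zero.mp (right_ne_zero_of_mul (hΔ ▸ Int.cast_ne_zero.mpr hne))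
  refine ⟨hx, ne_zero_pow (by norm_num) (left_ne_zero_of_mul (left_ne_zero_of_mul hD)),
    ne_zero_pow (by norm_num) (right_ne_zero_of_mul (left_ne_zero_of_mul hD)),
    right_ne_zero_of_mul hD, fun p hp ↦ ?_⟩
  rw [mem_primeDivisors (mul_ne_zero (by norm_num) hne)]
  by_cases h5 : (p : ℤ) ∣ 5
  · exact h5.mul_right _
  · exact (h.dvd_discriminant hx (Nat.prime_iff_prime_int.mp p.2) h5 hp).mul_left _

theorem encard_le_two_mul_encard_setOf_isSUnitSolution {Δ : ℤ} (hΔ : Δ ≠ 0) {S : Set (ℤ × ℤ)}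
    (hdisc : ∀ E ∈ S, discriminant E = Δ) {x : ℤ × ℤ → ℤ × ℤ}
    (hcoprime : ∀ E ∈ S, IsCoprime (x E).1 (x E).2) (hx : ∀ E ∈ S, IsTateParameter E (x E)) :
    S.encard ≤ 2 * {y | IsSUnitSolution (primeDivisors (5 * Δ)) y}.encard := by
  set T := primeDivisors (5 * Δ)
  have hmaps : Set.MapsTo (fun E ↦ (0 < E.2, x E)) S (Set.univ ×ˢ {y | IsSUnitSolution T y}) := by
    refine fun E hE ↦ ⟨trivial, ?_⟩
    have := (hx E hE).isSUnitSolution (hcoprime E hE) (hdisc E hE ▸ hΔ)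
    rwa [hdisc E hE] at this
  have hinj : Set.InjOn (fun E ↦ (0 < E.2, x E)) S := fun E hE E' hE' heq ↦ by
    obtain ⟨hsign, hxE⟩ := Prod.mk.inj heq
    exact (hx E hE).eq (hxE ▸ hx E' hE') (hdisc E hE ▸ hΔ) (by rw [hdisc E hE, hdisc E' hE'])
      (iff_of_eq hsign)
  refine (Set.encard_le_encard_of_injOn hmaps hinj).trans_eq ?_
  rw [Set.encard_prod, Set.encard_univ, ENat.card_eq_coe_fintype_card, Fintype.card_prop,
    Nat.cast_ofNat]

end TateParameters

theorem bound_order_five (Δ : ℤ) (hΔ : Δ ≠ 0) (t : ℕ)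
    (ht : t = Δ.natAbs.primeFactors.card) (S : Set (ℤ × ℤ))
    (hS : S = {AB : ℤ × ℤ | 4 * AB.1 ^ 3 + 27 * AB.2 ^ 2 ≠ 0 ∧
      -16 * (4 * AB.1 ^ 3 + 27 * AB.2 ^ 2) = Δ ∧
      ∃ P : WeierstrassCurve.Affine.Point
        (⟨0, 0, 0, (AB.1 : ℚ), (AB.2 : ℚ)⟩ : WeierstrassCurve.Affine ℚ),
        addOrderOf P = 5}) :
    S.Finite ∧ S.ncard ≤ 7 ^ 1815 + 6 * 7 ^ (20 * (t + 1)) := by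
  have hdisc : ∀ E ∈ S, discriminant E = Δ := fun E hE ↦ (hS ▸ hE).2.1
  have hparam : ∀ E ∈ S, ∃ x : ℤ × ℤ, IsCoprime x.1 x.2 ∧ IsTateParameter E x := fun E hE ↦
    (hS ▸ hE).2.2.elim fun _ ↦ exists_isTateParameter
  choose! x hcoprime hx using hparam
  have hcard : (primeDivisors (5 * Δ)).card ≤ t + 1 := ht ▸ card_primeDivisors_five_mul_le Δ
  have h5 : ⟨5, Nat.prime_five⟩ ∈ primeDivisors (5 * Δ) :=
    (mem_primeDivisors (mul_ne_zero (by norm_num) hΔ)).mpr (dvd_mul_right 5 Δ)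
  rw [← Set.encard_le_coe_iff_finite_ncard_le]
  refine (encard_le_two_mul_encard_setOf_isSUnitSolution hΔ hdisc hcoprime hx).trans ?_
  refine (mul_le_mul_right (encard_setOf_isSUnitSolution_le h5) 2).trans ?_
  exact_mod_cast two_mul_count_le (by norm_num) hcard
end
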